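/- Let m ≥ 0 be an integer and let μ be a positive measure on the upper half-plane Π⁺. The following are equivalent: (1) there exists C > 0 such that ∫_{Π⁺} |(□^m F)(z₁, 0, 0)|² dμ(z₁) ≤ C ‖F‖²_{H²(T_{Λ₃})} for every F ∈ H²(T_{Λ₃}); (2) there exists C' > 0 such that ∫_{Π⁺} |G(z₁)|² dμ(z₁) ≤ C' ‖G‖²_{A²_{4m+1}(Π⁺)} for every G ∈ A²_{4m+1}(Π⁺). -/

import Mathlib

open MeasureTheory Set
open scoped ENNReal NNReal

noncomputable section

/-- The Lorentz cone `Λ₃ = {y ∈ ℝ³ : y₁ + y₂ > 0, y₁² − y₂² − y₃² > 0}`. -/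
def Lambda3 : Set (Fin 3 → ℝ) :=
  {y | 0 < y 0 + y 1 ∧ 0 < (y 0) ^ 2 - (y 1) ^ 2 - (y 2) ^ 2}

/-- The tube domain `T_{Λ₃} = ℝ³ + iΛ₃ ⊂ ℂ³`. -/
def TLambda3 : Set (Fin 3 → ℂ) :=
  {z | (fun i => (z i).im) ∈ Lambda3}

/-- The determinant function of the Lorentz cone: `Δ(y) = y₁² − y₂² − y₃²`. -/
def DeltaL (y : Fin 3 → ℝ) : ℝ := (y 0) ^ 2 - (y 1) ^ 2 - (y 2) ^ 2

/-- Square of the Hardy space `H²(T_{Λ₃})` norm. -/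
def hardyNormSq (F : (Fin 3 → ℂ) → ℂ) : ℝ≥0∞ :=
  ⨆ y ∈ Lambda3,
    ∫⁻ x : Fin 3 → ℝ, (‖F (fun i => (x i : ℂ) + (y i : ℂ) * Complex.I)‖₊ : ℝ≥0∞) ^ 2

/-- Square of the weighted Bergman space `A²_ν(T_{Λ₃})` norm:
`‖G‖² = ∫_{Λ₃} ∫_{ℝ³} |G(x+iy)|² Δ(y)^{ν−3/2} dx dy`. -/
def bergNormSqTube (ν : ℝ) (G : (Fin 3 → ℂ) → ℂ) : ℝ≥0∞ :=
  ∫⁻ y in Lambda3,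
    (∫⁻ x : Fin 3 → ℝ, (‖G (fun i => (x i : ℂ) + (y i : ℂ) * Complex.I)‖₊ : ℝ≥0∞) ^ 2)
      * ENNReal.ofReal (DeltaL y ^ (ν - 3 / 2))

/-- Partial derivative in the `i`-th complex coordinate. -/
def pd (i : Fin 3) (F : (Fin 3 → ℂ) → ℂ) : (Fin 3 → ℂ) → ℂ :=
  fun z => fderiv ℂ F z (Pi.single i 1)

/-- The box operator `□ = −∂²/∂z₁² + ∂²/∂z₂² + ∂²/∂z₃²` associated to the Lorentz cone. -/
def Box (F : (Fin 3 → ℂ) → ℂ) : (Fin 3 → ℂ) → ℂ :=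
  fun z => - pd 0 (pd 0 F) z + pd 1 (pd 1 F) z + pd 2 (pd 2 F) z


/-- The upper half-plane `Π⁺`. -/
def UHP : Set ℂ := {z : ℂ | 0 < z.im}

/-- The weighted measure `dV_α(x+iy) = y^α dx dy` on the upper half-plane. -/
def Vm (α : ℝ) : Measure ℂ :=
  (volume.restrict UHP).withDensity fun z => ENNReal.ofReal (z.im ^ α)

/-- Square of the weighted Bergman space `A²_α(Π⁺)` norm:
`‖G‖² = ∫_{Π⁺} |G(x+iy)|² y^α dx dy`. -/
def bergNormSqUHP (α : ℝ) (G : ℂ → ℂ) : ℝ≥0∞ :=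
  ∫⁻ z, (‖G z‖₊ : ℝ≥0∞) ^ 2 ∂(Vm α)


lemma lintegral_polar (g : ℂ → ℝ≥0∞) (hg : Measurable g) :
    ∫⁻ z, g z = ∫⁻ ρ in Ioi (0:ℝ), ∫⁻ θ in Ioo (-Real.pi) Real.pi,
      ENNReal.ofReal ρ * g (circleMap 0 ρ θ) := by
  rw [← Complex.lintegral_comp_polarCoord_symm, polarCoord_target, Measure.volume_eq_prod,
    ← Measure.prod_restrict, lintegral_prod]
  · refine lintegral_congr fun ρ => lintegral_congr fun θ => ?_
    simp only [Complex.polarCoord_symm_apply, smul_eq_mul, circleMap, zero_add, Complex.exp_mul_I,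
      Complex.ofReal_cos, Complex.ofReal_sin]
  · apply Measurable.aemeasurable
    simp only [Complex.polarCoord_symm_apply, smul_eq_mul]
    fun_prop

lemma submean_circle (f : ℂ → ℂ) (r ρ : ℝ) (h0 : 0 < ρ) (hr : ρ < r)
    (hf : DifferentiableOn ℂ f (Metric.ball 0 r)) :
    ‖f 0‖ₑ ^ 2 * ENNReal.ofReal (2 * Real.pi) ≤
      ∫⁻ θ in Ioo (-Real.pi) Real.pi, ‖f (circleMap 0 ρ θ)‖ₑ ^ 2 := by
  have hd : DifferentiableOn ℂ (fun z => f z ^ 2) (Metric.ball 0 r) := hf.pow 2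
  have hsub : closure (Metric.ball (0:ℂ) |ρ|) ⊆ Metric.ball 0 r := by
    rw [abs_of_pos h0]
    exact Metric.closure_ball_subset_closedBall.trans (Metric.closedBall_subset_ball hr)
  have h1 := (hd.mono hsub).diffContOnCl.circleAverage
  rw [Real.circleAverage_eq_integral_add (-Real.pi)] at h1
  rw [intervalIntegral.integral_comp_add_right (fun θ => (fun z => f z ^ 2) (circleMap 0 ρ θ)),
    show (0:ℝ) + -Real.pi = -Real.pi by ring, show 2 * Real.pi + -Real.pi = Real.pi by ring,
    intervalIntegral.integral_of_le (by linarith [Real.pi_pos]), integral_Ioc_eq_integral_Ioo] at h1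
  have h2 : ∫ θ in Ioo (-Real.pi) Real.pi, f (circleMap 0 ρ θ) ^ 2 = (2 * Real.pi) • (f 0 ^ 2) := by
    rw [← h1, smul_smul, mul_inv_cancel₀ (by positivity), one_smul]
  calc ‖f 0‖ₑ ^ 2 * ENNReal.ofReal (2 * Real.pi) = ‖(2 * Real.pi) • (f 0 ^ 2)‖ₑ := by
        rw [enorm_smul, enorm_pow, Real.enorm_eq_ofReal (by positivity), mul_comm]
    _ ≤ ∫⁻ θ in Ioo (-Real.pi) Real.pi, ‖f (circleMap 0 ρ θ) ^ 2‖ₑ := by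
        rw [← h2]; exact enorm_integral_le_lintegral_enorm _
    _ = _ := by simp only [enorm_pow]

lemma measurable_indicator_of_continuousOn {α : Type*} [TopologicalSpace α] [MeasurableSpace α]
    [BorelSpace α] {f : α → ℂ} {U : Set α} (hU : IsOpen U) (hf : ContinuousOn f U) :
    Measurable (U.indicator f) := by
  classical
  rw [← Set.piecewise_eq_indicator]
  exact hf.measurable_piecewise continuousOn_const hU.measurableSet

lemma submean (f : ℂ → ℂ) (r : ℝ) (hr : 0 < r)
    (hf : DifferentiableOn ℂ f (Metric.ball 0 r)) :
    ‖f 0‖ₑ ^ 2 * ENNReal.ofReal (Real.pi * r ^ 2) ≤ ∫⁻ ζ in Metric.ball 0 r, ‖f ζ‖ₑ ^ 2 := by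
  have hm := measurable_indicator_of_continuousOn Metric.isOpen_ball hf.continuousOn
  have e1 : ∫⁻ ζ in Metric.ball 0 r, ‖f ζ‖ₑ ^ 2
      = ∫⁻ ζ, ‖(Metric.ball 0 r).indicator f ζ‖ₑ ^ 2 := by
    rw [← lintegral_indicator Metric.isOpen_ball.measurableSet]
    refine lintegral_congr fun z => ?_
    by_cases h : z ∈ Metric.ball 0 r
    · simp only [Set.indicator_of_mem h]
    · simp [Set.indicator_of_notMem h]
  rw [e1, lintegral_polar _ (by fun_prop)]
  calc ‖f 0‖ₑ ^ 2 * ENNReal.ofReal (Real.pi * r ^ 2)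
      = ∫⁻ ρ in Ioo 0 r, ENNReal.ofReal ρ * (‖f 0‖ₑ ^ 2 * ENNReal.ofReal (2 * Real.pi)) := by
        rw [lintegral_mul_const _ (by fun_prop), ← ofReal_integral_eq_lintegral_ofReal]
        · rw [← integral_Ioc_eq_integral_Ioo, ← intervalIntegral.integral_of_le hr.le, integral_id,
            mul_left_comm (ENNReal.ofReal _), ← ENNReal.ofReal_mul (by norm_num; positivity)]
          congr 2; ring
        · exact (continuous_id.integrableOn_Icc (a := 0) (b := r)).mono_set Ioo_subset_Icc_self
        · exact (ae_restrict_iff' measurableSet_Ioo).2 (ae_of_all _ fun x hx => hx.1.le)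
    _ ≤ ∫⁻ ρ in Ioo 0 r, ∫⁻ θ in Ioo (-Real.pi) Real.pi,
          ENNReal.ofReal ρ * ‖(Metric.ball 0 r).indicator f (circleMap 0 ρ θ)‖ₑ ^ 2 := by
        refine setLIntegral_mono' measurableSet_Ioo fun ρ hρ => ?_
        rw [lintegral_const_mul' _ _ ENNReal.ofReal_ne_top]
        gcongr
        refine (submean_circle f r ρ hρ.1 hρ.2 hf).trans_eq ?_
        refine lintegral_congr fun θ => ?_
        rw [Set.indicator_of_mem]
        simp [abs_of_pos hρ.1, hρ.2]
    _ ≤ _ := lintegral_mono_set Ioo_subset_Ioi_self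

lemma lintegral_inv_norm (r : ℝ) : ∫⁻ ζ in Metric.ball (0:ℂ) r, (‖ζ‖ₑ)⁻¹ < ⊤ := by
  rw [← lintegral_indicator Metric.isOpen_ball.measurableSet, lintegral_polar]
  · calc _ ≤ ∫⁻ ρ in Ioi (0:ℝ), ∫⁻ θ in Ioo (-Real.pi) Real.pi, (Iio r).indicator (fun _ => 1) ρ := by
          refine setLIntegral_mono' measurableSet_Ioi fun ρ hρ => ?_
          refine lintegral_mono fun θ => ?_
          have hρ' : 0 < ρ := hρ
          by_cases h : ρ < r
          · rw [Set.indicator_of_mem (show ρ ∈ Iio r from h)]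
            rw [Set.indicator_of_mem (by simp [abs_of_pos hρ', h])]
            have : ‖circleMap 0 ρ θ‖ₑ = ENNReal.ofReal ρ := by
              rw [← ofReal_norm]; simp [abs_of_pos hρ']
            rw [this]; exact ENNReal.mul_inv_le_one _
          · rw [Set.indicator_of_notMem (a := circleMap 0 ρ θ)]
            · simp
            · simp [abs_of_pos hρ']; linarith
    _ = ∫⁻ ρ in Ioi (0:ℝ), (Iio r).indicator (fun _ => ENNReal.ofReal (2 * Real.pi)) ρ := by
          refine lintegral_congr fun ρ => ?_
          rw [lintegral_const]
          by_cases h : ρ < r <;> simp [Set.indicator, h]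
          ring_nf; rw [ENNReal.ofReal_mul Real.pi_pos.le]; simp
    _ < ⊤ := by
          rw [lintegral_indicator measurableSet_Iio, lintegral_const]
          apply ENNReal.mul_lt_top ENNReal.ofReal_lt_top
          rw [Measure.restrict_apply MeasurableSet.univ]
          rw [Measure.restrict_apply (by measurability)]
          refine lt_of_le_of_lt (measure_mono (t := Ioo 0 r) ?_) (by simp)
          intro x hx; simp at hx; exact ⟨hx.2, hx.1⟩
  · exact (measurable_id.enorm.inv).indicator Metric.isOpen_ball.measurableSet


lemma strip_integrable (G : ℂ → ℂ) (a b M t : ℝ) (ht : t ∈ Icc a b)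
    (hc : ContinuousOn G {w | w.im ∈ Icc a b})
    (hM : ∀ w : ℂ, w.im ∈ Icc a b → ‖G w‖ ≤ M * (1 + w.re ^ 2)⁻¹) :
    Integrable (fun u : ℝ => G (u + t * Complex.I)) := by
  have hcont : Continuous (fun u : ℝ => G (u + t * Complex.I)) := by
    refine hc.comp_continuous (by fun_prop) fun u => ?_
    simpa using ht
  refine Integrable.mono' (integrable_inv_one_add_sq.const_mul M) hcont.aestronglyMeasurable
    (ae_of_all _ fun u => ?_)
  simpa using hM (u + t * Complex.I) (by simpa using ht)

lemma strip_shift (G : ℂ → ℂ) (a b M : ℝ) (hab : a ≤ b)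
    (hc : ContinuousOn G {w | w.im ∈ Icc a b})
    (hd : DifferentiableOn ℂ G {w | w.im ∈ Ioo a b})
    (hM : ∀ w : ℂ, w.im ∈ Icc a b → ‖G w‖ ≤ M * (1 + w.re ^ 2)⁻¹) :
    ∫ u : ℝ, G (u + a * Complex.I) = ∫ u : ℝ, G (u + b * Complex.I) := by
  have hrect : ∀ T : ℝ, (∫ x : ℝ in (-T)..T, G (x + a * Complex.I))
      - (∫ x : ℝ in (-T)..T, G (x + b * Complex.I))
      + Complex.I • (∫ y : ℝ in a..b, G ((T : ℝ) + y * Complex.I))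
      - Complex.I • (∫ y : ℝ in a..b, G ((-T : ℝ) + y * Complex.I)) = 0 := by
    intro T
    have := Complex.integral_boundary_rect_eq_zero_of_continuousOn_of_differentiableOn G
      (⟨-T, a⟩ : ℂ) (⟨T, b⟩ : ℂ) (hc.mono ?_) (hd.mono ?_)
    · simpa using this
    · intro w hw
      have := hw.2
      simpa [uIcc_of_le hab] using this
    · intro w hw
      have := hw.2
      simpa [hab] using this
  have hvert : ∀ s : ℝ → ℝ, (∀ T, s T ^ 2 = T ^ 2) →
      Filter.Tendsto (fun T : ℝ => Complex.I • (∫ y : ℝ in a..b, G ((s T : ℝ) + y * Complex.I)))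
      Filter.atTop (nhds 0) := by
    intro s hs
    have hlim : Filter.Tendsto (fun T : ℝ => M * (1 + T ^ 2)⁻¹ * |b - a|) Filter.atTop (nhds 0) := by
      have h1 : Filter.Tendsto (fun T : ℝ => 1 + T ^ 2) Filter.atTop Filter.atTop :=
        Filter.tendsto_atTop_add_const_left _ _ (Filter.tendsto_pow_atTop two_ne_zero)
      have := ((tendsto_inv_atTop_zero.comp h1).const_mul M).mul_const |b - a|
      simpa using this
    refine squeeze_zero_norm (fun T => ?_) hlim
    rw [norm_smul, Complex.norm_I, one_mul]
    refine intervalIntegral.norm_integral_le_of_norm_le_const fun y hy => ?_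
    rw [uIoc_of_le hab] at hy
    have := hM ((s T : ℝ) + y * Complex.I) (by simpa using ⟨hy.1.le, hy.2⟩)
    simpa [hs] using this
  have hA := intervalIntegral_tendsto_integral (strip_integrable G a b M a ⟨le_rfl, hab⟩ hc hM)
    Filter.tendsto_neg_atTop_atBot Filter.tendsto_id
  have hB := intervalIntegral_tendsto_integral (strip_integrable G a b M b ⟨hab, le_rfl⟩ hc hM)
    Filter.tendsto_neg_atTop_atBot Filter.tendsto_id
  have hlim := ((hA.sub hB).add (hvert id (fun _ => rfl))).sub (hvert (fun T => -T) (fun _ => by ring))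
  have hz : Filter.Tendsto (fun _ : ℝ => (0:ℂ)) Filter.atTop (nhds 0) := tendsto_const_nhds
  have := tendsto_nhds_unique (hlim.congr (fun T => hrect T)) hz
  simpa [sub_eq_zero] using this

/-- energy of a function on horizontal line -/
def lineE (H : ℂ → ℂ) (t : ℝ) : ℝ := ∫ u : ℝ, ‖H (u + t * Complex.I)‖ ^ 2

structure StripGood (H : ℂ → ℂ) (M : ℝ) : Prop where
  cont : ContinuousOn H {w | w.im ∈ Icc 0 Real.pi}
  diff : DifferentiableOn ℂ H {w | w.im ∈ Ioo 0 Real.pi}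
  bd : ∀ w : ℂ, w.im ∈ Icc 0 Real.pi → ‖H w‖ ^ 2 ≤ M * (1 + w.re ^ 2)⁻¹

lemma StripGood.integrable {H : ℂ → ℂ} {M : ℝ} (h : StripGood H M) {t : ℝ} (ht : t ∈ Icc 0 Real.pi) :
    Integrable (fun u : ℝ => ‖H (u + t * Complex.I)‖ ^ 2) := by
  have := strip_integrable (fun w => H w ^ 2) 0 Real.pi M t ht (h.cont.pow 2)
    (fun w hw => by rw [norm_pow]; exact h.bd w hw)
  have := this.norm
  simpa only [norm_pow] using this

lemma StripGood.half {H : ℂ → ℂ} {M : ℝ} (h : StripGood H M) {t : ℝ} (h0 : 0 ≤ t)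
    (ht : 2 * t ≤ Real.pi) : lineE H t ≤ (lineE H 0 + lineE H (2 * t)) / 2 := by
  set K : ℂ → ℂ := fun w => (starRingEnd ℂ) (H ((starRingEnd ℂ) w + (2 * t : ℝ) * Complex.I)) with hK
  have him : ∀ w : ℂ, ((starRingEnd ℂ) w + (2 * t : ℝ) * Complex.I).im = 2 * t - w.im := by
    intro w; simp; ring
  have hre : ∀ w : ℂ, ((starRingEnd ℂ) w + (2 * t : ℝ) * Complex.I).re = w.re := by
    intro w; simp
  have hopen : IsOpen {w : ℂ | w.im ∈ Ioo 0 Real.pi} := isOpen_Ioo.preimage Complex.continuous_im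
  have hs := strip_shift (fun w => H w * K w) 0 t M h0 ?_ ?_ ?_
  · have e1 : ∀ u : ℝ, H (u + t * Complex.I) * K (u + t * Complex.I)
        = ((‖H (u + t * Complex.I)‖ ^ 2 : ℝ) : ℂ) := by
      intro u
      have : (starRingEnd ℂ) (u + t * Complex.I : ℂ) + (2 * t : ℝ) * Complex.I = u + t * Complex.I := by
        simp; ring
      simp only [hK]
      rw [this, Complex.mul_conj, Complex.normSq_eq_norm_sq]
    have e2 : ∀ u : ℝ, K (u + (0:ℝ) * Complex.I) = (starRingEnd ℂ) (H (u + (2 * t : ℝ) * Complex.I)) := by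
      intro u
      simp [hK]
    simp only [e1, e2] at hs
    rw [integral_complex_ofReal] at hs
    have : lineE H t = ‖((∫ u : ℝ, ‖H (u + t * Complex.I)‖ ^ 2 : ℝ) : ℂ)‖ := by
      rw [Complex.norm_real, Real.norm_of_nonneg]; rfl
      exact integral_nonneg fun u => by positivity
    rw [this, ← hs]
    have hi0 := h.integrable (t := 0) ⟨le_rfl, Real.pi_pos.le⟩
    have hi2 := h.integrable (t := 2 * t) ⟨by linarith, ht⟩
    refine (norm_integral_le_integral_norm _).trans ?_
    unfold lineE
    rw [← integral_add hi0 hi2, ← integral_div]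
    refine integral_mono_of_nonneg (ae_of_all _ fun u => by positivity) ((hi0.add hi2).div_const 2)
      (ae_of_all _ fun u => ?_)
    simp only [norm_mul, RCLike.norm_conj]
    nlinarith [sq_nonneg (‖H (u + (0:ℝ) * Complex.I)‖ - ‖H (u + (2 * t : ℝ) * Complex.I)‖)]
  · refine (h.cont.mono fun w hw => ?_).mul ?_
    · exact ⟨hw.1, by linarith [hw.2]⟩
    · refine Complex.continuous_conj.comp_continuousOn (h.cont.comp (by fun_prop) fun w hw => ?_)
      simp only [mem_ofPred_eq, him]
      exact ⟨by linarith [hw.2], by linarith [hw.1]⟩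
  · intro w hw
    refine DifferentiableAt.differentiableWithinAt ?_
    refine DifferentiableAt.mul (h.diff.differentiableAt (hopen.mem_nhds ?_)) ?_
    · exact ⟨hw.1, by linarith [hw.2]⟩
    · have hd : DifferentiableAt ℂ (fun z => H (z + (2 * t : ℝ) * Complex.I)) ((starRingEnd ℂ) w) := by
        have : DifferentiableAt ℂ H ((starRingEnd ℂ) w + (2 * t : ℝ) * Complex.I) := by
          refine h.diff.differentiableAt (hopen.mem_nhds ?_)
          simp only [mem_ofPred_eq, him]
          exact ⟨by linarith [hw.2], by linarith [hw.1]⟩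
        exact DifferentiableAt.comp (g := H) (f := fun z => z + (2 * t : ℝ) * Complex.I) _ this (by fun_prop)
      have := hd.conj_conj
      simpa [Function.comp_def, hK] using this
  · intro w hw
    have b1 := h.bd w ⟨hw.1, by linarith [hw.2]⟩
    have b2 := h.bd ((starRingEnd ℂ) w + (2 * t : ℝ) * Complex.I) (by
      rw [him]; exact ⟨by linarith [hw.2], by linarith [hw.1]⟩)
    rw [hre] at b2
    simp only [norm_mul, hK, RCLike.norm_conj]
    nlinarith [sq_nonneg (‖H w‖ - ‖H ((starRingEnd ℂ) w + (2 * t : ℝ) * Complex.I)‖)]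

lemma StripGood.refl {H : ℂ → ℂ} {M : ℝ} (h : StripGood H M) :
    StripGood (fun w => H (Real.pi * Complex.I - w)) M := by
  refine ⟨h.cont.comp (by fun_prop) ?_, h.diff.comp (by fun_prop) ?_, fun w hw => ?_⟩
  · intro w hw; simp at hw ⊢; exact ⟨hw.2, hw.1⟩
  · intro w hw; simp at hw ⊢; exact ⟨hw.2, hw.1⟩
  · have := h.bd (Real.pi * Complex.I - w) (by simp at hw ⊢; exact ⟨hw.2, hw.1⟩)
    simpa using this

lemma lineE_refl (H : ℂ → ℂ) (t : ℝ) :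
    lineE (fun w => H (Real.pi * Complex.I - w)) t = lineE H (Real.pi - t) := by
  unfold lineE
  rw [← integral_neg_eq_self]
  refine integral_congr_ae (ae_of_all _ fun u => ?_)
  simp only []
  congr 3
  push_cast; ring

lemma StripGood.main {H : ℂ → ℂ} {M : ℝ} (h : StripGood H M) {t : ℝ} (ht : t ∈ Icc 0 Real.pi) :
    lineE H t ≤ lineE H 0 + lineE H Real.pi := by
  set B := lineE H 0 + lineE H Real.pi
  set K := ∫ u : ℝ, M * (1 + u ^ 2)⁻¹
  have hpos : ∀ s, 0 ≤ lineE H s := fun s => integral_nonneg fun u => by positivity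
  have hK : ∀ s ∈ Icc 0 Real.pi, lineE H s ≤ K := by
    intro s hs
    refine integral_mono (h.integrable hs) (integrable_inv_one_add_sq.const_mul M) fun u => ?_
    simpa using h.bd (u + s * Complex.I) (by simpa using hs)
  have key : ∀ n : ℕ, ∀ s ∈ Icc 0 Real.pi, lineE H s ≤ B + K / 2 ^ n := by
    intro n
    induction n with
    | zero =>
      intro s hs
      have := hK s hs
      have h1 := hpos 0
      have h2 := hpos Real.pi
      simp only [pow_zero, div_one]
      have : B = lineE H 0 + lineE H Real.pi := rfl
      linarith [hK s hs]
    | succ n ih =>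
      intro s hs
      have h1 := hpos 0
      have h2 := hpos Real.pi
      have hB : B = lineE H 0 + lineE H Real.pi := rfl
      have e : K / 2 ^ (n + 1) = (K / 2 ^ n) / 2 := by rw [pow_succ]; field_simp
      rcases le_total (2 * s) Real.pi with hc | hc
      · have := h.half hs.1 hc
        have := ih (2 * s) ⟨by linarith [hs.1], hc⟩
        rw [e]; linarith
      · have h3 := h.refl.half (t := Real.pi - s) (by linarith [hs.2]) (by linarith)
        simp only [lineE_refl] at h3
        have := ih (Real.pi - 2 * (Real.pi - s)) ⟨by linarith, by linarith [hs.2]⟩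
        simp only [sub_sub_cancel, sub_zero] at h3
        rw [e]; linarith
  have hl : Filter.Tendsto (fun n : ℕ => B + K / 2 ^ n) Filter.atTop (nhds (B + 0)) := by
    refine tendsto_const_nhds.add ?_
    have := (tendsto_pow_atTop_nhds_zero_of_lt_one (r := (1/2:ℝ)) (by norm_num) (by norm_num)).const_mul K
    simp only [mul_zero] at this
    refine this.congr fun n => ?_
    rw [one_div, inv_pow, div_eq_mul_inv]
  rw [add_zero] at hl
  exact ge_of_tendsto' hl fun n => key n t ht

lemma lintegral_Ioi_exp (g : ℝ → ℝ≥0∞) (k : ℝ) (hk : 0 < k) :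
    ∫⁻ y in Ioi (0:ℝ), g y = ∫⁻ u : ℝ, ENNReal.ofReal (k * Real.exp u) * g (k * Real.exp u) := by
  have him : (fun u => k * Real.exp u) '' univ = Ioi 0 := by
    ext y; constructor
    · rintro ⟨u, -, rfl⟩; exact mul_pos hk (Real.exp_pos u)
    · intro hy
      have hy' : 0 < y := hy
      refine ⟨Real.log (y / k), trivial, ?_⟩
      simp only [Real.exp_log (div_pos hy' hk)]
      field_simp
  rw [← him, lintegral_image_eq_lintegral_abs_deriv_mul MeasurableSet.univ
    (f' := fun u => k * Real.exp u)
    (fun u _ => ((Real.hasDerivAt_exp u).const_mul k).hasDerivWithinAt)]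
  · rw [Measure.restrict_univ]
    refine lintegral_congr fun u => ?_
    rw [abs_of_pos (mul_pos hk (Real.exp_pos u))]
  · intro a _ b _ hab
    exact Real.exp_injective (mul_left_cancel₀ hk.ne' hab)

lemma ray_bound (f : ℂ → ℂ) (M : ℝ) (hc : ContinuousOn f {z | 0 ≤ z.im})
    (hd : DifferentiableOn ℂ f {z | 0 < z.im})
    (hM : ∀ z : ℂ, 0 ≤ z.im → ‖f z‖ ^ 2 * (1 + ‖z‖ ^ 2) ≤ M) (σ : ℂ) (hσ : 0 < σ.im) :
    ∫⁻ y in Ioi (0:ℝ), ‖f (y * σ)‖ₑ ^ 2 ≤ ENNReal.ofReal (‖σ‖⁻¹) * ∫⁻ s : ℝ, ‖f s‖ₑ ^ 2 := by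
  have hσ0 : σ ≠ 0 := by rintro rfl; simp at hσ
  have hσn : 0 < ‖σ‖ := norm_pos_iff.2 hσ0
  set H : ℂ → ℂ := fun w => f (Complex.exp w) * Complex.exp (w / 2) with hH
  have hnorm : ∀ w : ℂ, ‖H w‖ ^ 2 = Real.exp w.re * ‖f (Complex.exp w)‖ ^ 2 := by
    intro w
    simp only [hH, norm_mul, mul_pow, Complex.norm_exp]
    rw [← Real.exp_nat_mul, mul_comm]
    congr 2
    simp
    ring
  have hgood : StripGood H (2 * M) := by
    refine ⟨?_, ?_, ?_⟩
    · refine (hc.comp (by fun_prop) fun w hw => ?_).mul (by fun_prop)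
      simp only [mem_ofPred_eq, Complex.exp_im]
      exact mul_nonneg (Real.exp_pos _).le (Real.sin_nonneg_of_nonneg_of_le_pi hw.1 hw.2)
    · refine (hd.comp (by fun_prop) fun w hw => ?_).mul (by fun_prop)
      simp only [mem_ofPred_eq, Complex.exp_im]
      exact mul_pos (Real.exp_pos _) (Real.sin_pos_of_pos_of_lt_pi hw.1 hw.2)
    · intro w hw
      rw [hnorm]
      have h1 := hM (Complex.exp w) (by
        rw [Complex.exp_im]
        exact mul_nonneg (Real.exp_pos _).le (Real.sin_nonneg_of_nonneg_of_le_pi hw.1 hw.2))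
      rw [Complex.norm_exp] at h1
      set E := Real.exp w.re
      have hE : 0 < E := Real.exp_pos _
      set q := ‖f (Complex.exp w)‖ ^ 2
      have hq : 0 ≤ q := by positivity
      have hquad : 1 + w.re ^ 2 ≤ 2 * (E + E⁻¹) := by
        have h2 : E⁻¹ = Real.exp (-w.re) := (Real.exp_neg _).symm
        have h3 : 0 < E⁻¹ := by positivity
        rcases le_total 0 w.re with hp | hp
        · have := Real.quadratic_le_exp_of_nonneg hp
          change 1 + w.re + w.re ^ 2 / 2 ≤ E at this
          linarith
        · have := Real.quadratic_le_exp_of_nonneg (x := -w.re) (by linarith)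
          rw [← h2] at this
          nlinarith
      rw [← div_eq_mul_inv, le_div_iff₀ (by positivity)]
      calc E * q * (1 + w.re ^ 2) ≤ E * q * (2 * (E + E⁻¹)) := by gcongr
        _ = 2 * (q * (1 + E ^ 2)) := by field_simp; ring
        _ ≤ 2 * M := by linarith
  have hline : ∀ t ∈ Icc 0 Real.pi, ENNReal.ofReal (lineE H t)
      = ∫⁻ u : ℝ, ENNReal.ofReal (Real.exp u) * ‖f (Complex.exp (u + t * Complex.I))‖ₑ ^ 2 := by
    intro t ht
    unfold lineE
    rw [ofReal_integral_eq_lintegral_ofReal (hgood.integrable ht) (ae_of_all _ fun u => by positivity)]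
    refine lintegral_congr fun u => ?_
    rw [hnorm, ENNReal.ofReal_mul (Real.exp_pos _).le, ENNReal.ofReal_pow (norm_nonneg _), ofReal_norm]
    simp
  have hray : ∫⁻ y in Ioi (0:ℝ), ‖f (y * σ)‖ₑ ^ 2
      = ENNReal.ofReal (‖σ‖⁻¹) * ENNReal.ofReal (lineE H σ.arg) := by
    rw [lintegral_Ioi_exp _ ‖σ‖⁻¹ (by positivity), hline σ.arg
      ⟨Complex.arg_nonneg_iff.2 hσ.le, Complex.arg_le_pi σ⟩,
      ← lintegral_const_mul' _ _ ENNReal.ofReal_ne_top]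
    refine lintegral_congr fun u => ?_
    rw [ENNReal.ofReal_mul (by positivity), mul_assoc]
    congr 5
    rw [Complex.exp_add]
    nth_rewrite 2 [← Complex.norm_mul_exp_arg_mul_I σ]
    push_cast
    have : (‖σ‖ : ℂ) ≠ 0 := by exact_mod_cast hσn.ne'
    field_simp
  have hpos : ∫⁻ y in Ioi (0:ℝ), ‖f y‖ₑ ^ 2 = ENNReal.ofReal (lineE H 0) := by
    rw [lintegral_Ioi_exp _ 1 one_pos, hline 0 ⟨le_rfl, Real.pi_pos.le⟩]
    refine lintegral_congr fun u => ?_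
    simp
  have hneg : ∫⁻ y in Iio (0:ℝ), ‖f y‖ₑ ^ 2 = ENNReal.ofReal (lineE H Real.pi) := by
    have : ∫⁻ y in Iio (0:ℝ), ‖f y‖ₑ ^ 2 = ∫⁻ y in Ioi (0:ℝ), ‖f (-y : ℝ)‖ₑ ^ 2 := by
      have := (Measure.measurePreserving_neg (volume : Measure ℝ)).setLIntegral_comp_preimage_emb
        (MeasurableEquiv.neg ℝ).measurableEmbedding (fun y : ℝ => ‖f y‖ₑ ^ 2) (Iio 0)
      rw [← this]
      simp
    rw [this, lintegral_Ioi_exp _ 1 one_pos, hline Real.pi ⟨Real.pi_pos.le, le_rfl⟩]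
    refine lintegral_congr fun u => ?_
    rw [Complex.exp_add, Complex.exp_pi_mul_I]
    simp
  calc _ = ENNReal.ofReal (‖σ‖⁻¹) * ENNReal.ofReal (lineE H σ.arg) := hray
    _ ≤ ENNReal.ofReal (‖σ‖⁻¹) * (ENNReal.ofReal (lineE H Real.pi) + ENNReal.ofReal (lineE H 0)) := by
        gcongr
        rw [add_comm, ← ENNReal.ofReal_add]
        · exact ENNReal.ofReal_le_ofReal (hgood.main ⟨Complex.arg_nonneg_iff.2 hσ.le, Complex.arg_le_pi σ⟩)
        · exact integral_nonneg fun u => by positivity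
        · exact integral_nonneg fun u => by positivity
    _ ≤ _ := by
        gcongr
        rw [← hpos, ← hneg, ← lintegral_union measurableSet_Ioi]
        · exact setLIntegral_le_lintegral _ _
        · exact disjoint_left.2 fun x hx hx' => lt_asymm (mem_Iio.1 hx) (mem_Ioi.1 hx')


lemma slice_deriv {F : (Fin 3 → ℂ) → ℂ} {z v : Fin 3 → ℂ} (hF : DifferentiableAt ℂ F z) :
    HasDerivAt (fun t : ℂ => F (z + t • v)) (fderiv ℂ F z v) 0 := by
  have h1 : HasDerivAt (fun t : ℂ => z + t • v) v 0 := by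
    simpa using ((hasDerivAt_id (0:ℂ)).smul_const v).const_add z
  have h2 : HasFDerivAt F (fderiv ℂ F z) (z + (0:ℂ) • v) := by simpa using hF.hasFDerivAt
  exact h2.comp_hasDerivAt (0:ℂ) h1

lemma slice_diff {F : (Fin 3 → ℂ) → ℂ} {U : Set (Fin 3 → ℂ)} (hF : DifferentiableOn ℂ F U)
    (z v : Fin 3 → ℂ) :
    DifferentiableOn ℂ (fun t : ℂ => F (z + t • v)) ((fun t : ℂ => z + t • v) ⁻¹' U) :=
  hF.comp (by fun_prop) (fun _ h => h)

lemma norm_fderiv_le_of {F : (Fin 3 → ℂ) → ℂ} {U : Set (Fin 3 → ℂ)} (hU : IsOpen U)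
    (hF : DifferentiableOn ℂ F U) {z : Fin 3 → ℂ} {δ M : ℝ} (hδ : 0 < δ)
    (hs : Metric.closedBall z δ ⊆ U) (hM : ∀ w ∈ Metric.closedBall z δ, ‖F w‖ ≤ M) :
    ‖fderiv ℂ F z‖ ≤ M / δ := by
  have hzz : z ∈ Metric.closedBall z δ := Metric.mem_closedBall_self hδ.le
  have hM0 : 0 ≤ M := (norm_nonneg _).trans (hM z hzz)
  refine ContinuousLinearMap.opNorm_le_of_unit_norm (by positivity) fun v hv => ?_
  have hdz : DifferentiableAt ℂ F z := hF.differentiableAt (hU.mem_nhds (hs hzz))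
  have hmem : ∀ t : ℂ, ‖t‖ ≤ δ → z + t • v ∈ Metric.closedBall z δ := by
    intro t ht
    simpa [norm_smul, hv] using ht
  rw [← (slice_deriv (v := v) hdz).deriv]
  refine Complex.norm_deriv_le_of_forall_mem_sphere_norm_le hδ ?_ ?_
  · refine ((slice_diff hF z v).mono fun t ht => hs (hmem t ?_)).diffContOnCl
    have := Metric.closure_ball_subset_closedBall ht
    simpa using this
  · intro t ht
    exact hM _ (hmem t (by simpa using (Metric.sphere_subset_closedBall ht)))

lemma pd_bound {F : (Fin 3 → ℂ) → ℂ} {U : Set (Fin 3 → ℂ)} (hU : IsOpen U)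
    (hF : DifferentiableOn ℂ F U) {z : Fin 3 → ℂ} {δ M : ℝ} (hδ : 0 < δ)
    (hs : Metric.closedBall z δ ⊆ U) (hM : ∀ w ∈ Metric.closedBall z δ, ‖F w‖ ≤ M) (i : Fin 3) :
    ‖pd i F z‖ ≤ M / δ := by
  have h := norm_fderiv_le_of hU hF hδ hs hM
  refine (ContinuousLinearMap.le_opNorm _ _).trans ?_
  rw [Pi.norm_single]
  simpa using h

lemma pd_differentiableOn {F : (Fin 3 → ℂ) → ℂ} {U : Set (Fin 3 → ℂ)} (hU : IsOpen U)
    (hF : DifferentiableOn ℂ F U) (i : Fin 3) : DifferentiableOn ℂ (pd i F) U := by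
  intro z0 hz0
  refine DifferentiableAt.differentiableWithinAt ?_
  obtain ⟨R, hR, hRU⟩ := Metric.nhds_basis_closedBall.mem_iff.1 (hU.mem_nhds hz0)
  obtain ⟨M, hM⟩ := (isCompact_closedBall z0 R).exists_bound_of_continuousOn
    (hF.continuousOn.mono hRU)
  set r := R / 3 with hr
  have hr0 : 0 < r := by positivity
  set e : Fin 3 → ℂ := Pi.single i 1 with he
  have hen : ‖e‖ = 1 := by rw [he, Pi.norm_single]; simp
  have hin : ∀ z ∈ Metric.ball z0 r, ∀ t : ℂ, ‖t‖ ≤ r → z + t • e ∈ Metric.closedBall z0 (2 * r) := by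
    intro z hz t ht
    rw [Metric.mem_closedBall, dist_eq_norm]
    rw [Metric.mem_ball, dist_eq_norm] at hz
    calc ‖z + t • e - z0‖ = ‖(z - z0) + t • e‖ := by congr 1; abel
      _ ≤ ‖z - z0‖ + ‖t • e‖ := norm_add_le _ _
      _ ≤ r + r := by rw [norm_smul, hen, mul_one]; exact add_le_add hz.le ht
      _ = _ := by ring
  have h2R : Metric.closedBall z0 (2 * r) ⊆ Metric.closedBall z0 R :=
    Metric.closedBall_subset_closedBall (by rw [hr]; linarith)
  have hcirc : ∀ θ, ‖circleMap 0 r θ‖ = r := fun θ => by simp [abs_of_pos hr0]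
  set k : ℝ → ℂ := fun θ => deriv (circleMap 0 r) θ * ((circleMap 0 r θ) ^ 2)⁻¹ with hk
  have hkc : Continuous k := by
    simp only [hk, deriv_circleMap]
    refine Continuous.mul (by fun_prop) (Continuous.inv₀ (by fun_prop) fun θ => ?_)
    exact pow_ne_zero _ (circleMap_ne_center hr0.ne')
  have hform : ∀ z ∈ Metric.ball z0 r, pd i F z = (2 * Real.pi * Complex.I : ℂ)⁻¹ *
      ∫ θ in (0:ℝ)..2 * Real.pi, k θ • F (z + circleMap 0 r θ • e) := by
    intro z hz
    have hdz : DifferentiableAt ℂ F z := hF.differentiableAt (hU.mem_nhds (hRU (h2R (by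
      simpa using hin z hz 0 (by simp [hr0.le])))))
    have h1 := (slice_deriv (v := e) hdz).deriv
    have h2 := Complex.two_pi_I_inv_smul_circleIntegral_sub_sq_inv_smul_of_differentiable
      (c := 0) (w₀ := 0) (R := r) (hU.preimage (by fun_prop : Continuous fun t : ℂ => z + t • e))
      (fun t ht => hRU (h2R (hin z hz t (by simpa using ht)))) (slice_diff hF z e)
      (Metric.mem_ball_self hr0)
    change fderiv ℂ F z e = _
    rw [← h1, ← h2, smul_eq_mul, circleIntegral]
    congr 2
    ext θ
    simp only [hk, sub_zero, smul_eq_mul, mul_assoc]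
  have hcontθ : ∀ z ∈ Metric.ball z0 r,
      Continuous (fun θ : ℝ => k θ • F (z + circleMap 0 r θ • e)) := by
    intro z hz
    refine hkc.smul (hF.continuousOn.comp_continuous (by fun_prop) fun θ => ?_)
    exact hRU (h2R (hin z hz _ (hcirc θ).le))
  have hder : HasFDerivAt (fun z => ∫ θ in (0:ℝ)..2 * Real.pi, k θ • F (z + circleMap 0 r θ • e))
      (∫ θ in (0:ℝ)..2 * Real.pi, k θ • fderiv ℂ F (z0 + circleMap 0 r θ • e)) z0 := by
    refine intervalIntegral.hasFDerivAt_integral_of_dominated_of_fderiv_le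
      (F' := fun z θ => k θ • fderiv ℂ F (z + circleMap 0 r θ • e))
      (bound := fun θ => ‖k θ‖ * (M / r))
      (Metric.ball_mem_nhds z0 hr0) ?_ ?_ ?_ ?_ ?_ ?_
    · filter_upwards [Metric.ball_mem_nhds z0 hr0] with z hz
      exact (hcontθ z hz).aestronglyMeasurable
    · exact (hcontθ z0 (Metric.mem_ball_self hr0)).intervalIntegrable _ _
    · refine (Measurable.aestronglyMeasurable ?_)
      refine hkc.measurable.smul ?_
      exact (measurable_fderiv ℂ F).comp (by fun_prop)
    · refine ae_of_all _ fun θ _ z hz => ?_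
      rw [norm_smul]
      gcongr
      have hp := hin z hz _ (hcirc θ).le
      have hsub : Metric.closedBall (z + circleMap 0 r θ • e) r ⊆ Metric.closedBall z0 R := by
        refine Metric.closedBall_subset_closedBall' ?_
        have : dist (z + circleMap 0 r θ • e) z0 ≤ 2 * r := hp
        rw [hr] at *; linarith
      exact norm_fderiv_le_of hU hF hr0 (hsub.trans hRU) fun w hw => hM w (hsub hw)
    · exact (Continuous.intervalIntegrable (by fun_prop) _ _)
    · refine ae_of_all _ fun θ _ z hz => ?_
      have hd : DifferentiableAt ℂ F (z + circleMap 0 r θ • e) :=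
        hF.differentiableAt (hU.mem_nhds (hRU (h2R (hin z hz _ (hcirc θ).le))))
      have := hd.hasFDerivAt
      have h3 : HasFDerivAt (fun z => F (z + circleMap 0 r θ • e))
          (fderiv ℂ F (z + circleMap 0 r θ • e)) z := by
        exact hasFDerivAt_comp_add_right _ |>.2 this
      exact h3.const_smul (k θ)
  have := (hder.differentiableAt.const_mul ((2 * Real.pi * Complex.I : ℂ)⁻¹))
  refine this.congr_of_eventuallyEq ?_
  filter_upwards [Metric.ball_mem_nhds z0 hr0] with z hz
  exact hform z hz

lemma pd_congr {F G : (Fin 3 → ℂ) → ℂ} {U : Set (Fin 3 → ℂ)} (hU : IsOpen U)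
    (h : EqOn F G U) (i : Fin 3) : EqOn (pd i F) (pd i G) U := by
  intro z hz
  unfold pd
  rw [Filter.EventuallyEq.fderiv_eq (h.eventuallyEq_of_mem (hU.mem_nhds hz))]

lemma Box_congr {F G : (Fin 3 → ℂ) → ℂ} {U : Set (Fin 3 → ℂ)} (hU : IsOpen U)
    (h : EqOn F G U) : EqOn (Box F) (Box G) U := by
  intro z hz
  have := fun i => pd_congr hU (pd_congr hU h i) i hz
  unfold Box
  rw [this, this, this]

lemma Box_iter_congr {F G : (Fin 3 → ℂ) → ℂ} {U : Set (Fin 3 → ℂ)} (hU : IsOpen U)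
    (h : EqOn F G U) (m : ℕ) : EqOn (Box^[m] F) (Box^[m] G) U := by
  induction m with
  | zero => exact h
  | succ m ih => rw [Function.iterate_succ_apply', Function.iterate_succ_apply']; exact Box_congr hU ih

lemma Box_differentiableOn {F : (Fin 3 → ℂ) → ℂ} {U : Set (Fin 3 → ℂ)} (hU : IsOpen U)
    (hF : DifferentiableOn ℂ F U) : DifferentiableOn ℂ (Box F) U := by
  have := fun i => pd_differentiableOn hU (pd_differentiableOn hU hF i) i
  unfold Box
  exact ((this 0).neg.add (this 1)).add (this 2)

lemma Box_iter_differentiableOn {F : (Fin 3 → ℂ) → ℂ} {U : Set (Fin 3 → ℂ)} (hU : IsOpen U)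
    (hF : DifferentiableOn ℂ F U) (m : ℕ) : DifferentiableOn ℂ (Box^[m] F) U := by
  induction m with
  | zero => exact hF
  | succ m ih => rw [Function.iterate_succ_apply']; exact Box_differentiableOn hU ih

lemma Box_bound {F : (Fin 3 → ℂ) → ℂ} {U : Set (Fin 3 → ℂ)} (hU : IsOpen U)
    (hF : DifferentiableOn ℂ F U) {z : Fin 3 → ℂ} {δ M : ℝ} (hδ : 0 < δ)
    (hs : Metric.closedBall z (2 * δ) ⊆ U) (hM : ∀ w ∈ Metric.closedBall z (2 * δ), ‖F w‖ ≤ M) :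
    ‖Box F z‖ ≤ 3 / δ ^ 2 * M := by
  have hsub : ∀ w ∈ Metric.closedBall z δ, Metric.closedBall w δ ⊆ Metric.closedBall z (2 * δ) := by
    intro w hw
    refine Metric.closedBall_subset_closedBall' ?_
    have : dist w z ≤ δ := hw
    linarith
  have h2 : ∀ i, ‖pd i (pd i F) z‖ ≤ M / δ / δ := by
    intro i
    refine pd_bound hU (pd_differentiableOn hU hF i) hδ ?_ ?_ i
    · exact (Metric.closedBall_subset_closedBall (by linarith)).trans hs
    · intro w hw
      exact pd_bound hU hF hδ ((hsub w hw).trans hs) (fun w' hw' => hM w' (hsub w hw hw')) i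
  unfold Box
  calc _ ≤ ‖pd 0 (pd 0 F) z‖ + ‖pd 1 (pd 1 F) z‖ + ‖pd 2 (pd 2 F) z‖ := by
        refine (norm_add_le _ _).trans ?_
        gcongr
        refine (norm_add_le _ _).trans ?_
        rw [norm_neg]
    _ ≤ M / δ / δ + M / δ / δ + M / δ / δ := by gcongr <;> exact h2 _
    _ = _ := by field_simp; ring

lemma Box_iter_bound {U : Set (Fin 3 → ℂ)} (hU : IsOpen U) {z0 : Fin 3 → ℂ} {δ : ℝ} (hδ : 0 < δ)
    (m : ℕ) : ∀ {F : (Fin 3 → ℂ) → ℂ} {R M : ℝ}, DifferentiableOn ℂ F U → 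
    Metric.closedBall z0 (R + 2 * m * δ) ⊆ U →
    (∀ w ∈ Metric.closedBall z0 (R + 2 * m * δ), ‖F w‖ ≤ M) →
    ∀ z ∈ Metric.closedBall z0 R, ‖Box^[m] F z‖ ≤ (3 / δ ^ 2) ^ m * M := by
  induction m with
  | zero => intro F R M hF hs hM z hz; simpa using hM z (by simpa using hz)
  | succ m ih =>
    intro F R M hF hs hM z hz
    rw [Function.iterate_succ_apply]
    have hsub : ∀ w ∈ Metric.closedBall z0 (R + 2 * m * δ), Metric.closedBall w (2 * δ) ⊆
        Metric.closedBall z0 (R + 2 * (m + 1 : ℕ) * δ) := by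
      intro w hw
      refine Metric.closedBall_subset_closedBall' ?_
      have : dist w z0 ≤ R + 2 * m * δ := hw
      push_cast; linarith
    have := ih (F := Box F) (R := R) (M := 3 / δ ^ 2 * M) (Box_differentiableOn hU hF) ?_ ?_ z hz
    · rw [pow_succ, mul_assoc]; exact this
    · refine (Metric.closedBall_subset_closedBall ?_).trans hs
      push_cast; linarith
    · intro w hw
      exact Box_bound hU hF hδ ((hsub w hw).trans hs) (fun w' hw' => hM w' (hsub w hw hw'))


lemma mem_Lambda3_iff (y : Fin 3 → ℝ) :
    y ∈ Lambda3 ↔ 0 < y 0 ∧ (y 1) ^ 2 + (y 2) ^ 2 < (y 0) ^ 2 := by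
  constructor
  · rintro ⟨h1, h2⟩
    refine ⟨?_, by linarith⟩
    by_contra h
    push Not at h
    nlinarith [sq_nonneg (y 2)]
  · rintro ⟨h1, h2⟩
    refine ⟨?_, by linarith⟩
    by_contra h
    push Not at h
    nlinarith [sq_nonneg (y 2)]

lemma mem_TLambda3_iff (z : Fin 3 → ℂ) :
    z ∈ TLambda3 ↔ 0 < (z 0).im ∧ (z 1).im ^ 2 + (z 2).im ^ 2 < (z 0).im ^ 2 := by
  change (fun i => (z i).im) ∈ Lambda3 ↔ _
  exact mem_Lambda3_iff (fun i => (z i).im)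

lemma isOpen_TLambda3 : IsOpen TLambda3 := by
  have : TLambda3 = {z : Fin 3 → ℂ | 0 < (z 0).im} ∩
      {z : Fin 3 → ℂ | (z 1).im ^ 2 + (z 2).im ^ 2 < (z 0).im ^ 2} := by
    ext z; exact mem_TLambda3_iff z
  rw [this]
  exact (isOpen_lt (by fun_prop) (by fun_prop)).inter (isOpen_lt (by fun_prop) (by fun_prop))

lemma differentiable_vec3 {a b c : ℂ → ℂ} (ha : Differentiable ℂ a) (hb : Differentiable ℂ b)
    (hc : Differentiable ℂ c) : Differentiable ℂ (fun t => ![a t, b t, c t]) := by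
  rw [differentiable_pi]
  intro i; fin_cases i <;> simpa

lemma continuous_vec3 {α : Type*} [TopologicalSpace α] {a b c : α → ℂ} (ha : Continuous a)
    (hb : Continuous b) (hc : Continuous c) : Continuous (fun t => ![a t, b t, c t]) := by
  rw [continuous_pi_iff]
  intro i; fin_cases i <;> simpa

@[fun_prop]
lemma measurable_vec3 {α : Type*} [MeasurableSpace α] {a b c : α → ℂ} (ha : Measurable a)
    (hb : Measurable b) (hc : Measurable c) : Measurable (fun t => ![a t, b t, c t]) := by
  rw [measurable_pi_iff]
  intro i; fin_cases i <;> simpa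

lemma submean3 {F : (Fin 3 → ℂ) → ℂ} {U : Set (Fin 3 → ℂ)}
    (hF : DifferentiableOn ℂ F U) (p0 p1 p2 y : ℂ) (r : ℝ) (hr : 0 < r)
    (hs : ∀ ζ0 ∈ Metric.ball (0:ℂ) r, ∀ ζ1 ∈ Metric.ball (0:ℂ) r, ∀ ζ2 ∈ Metric.ball (0:ℂ) r,
      ![p0 + y * ζ0, p1 + y * ζ1, p2 + y * ζ2] ∈ U) :
    ‖F ![p0, p1, p2]‖ₑ ^ 2 * ENNReal.ofReal (Real.pi * r ^ 2) ^ 3 ≤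
      ∫⁻ ζ0 in Metric.ball (0:ℂ) r, ∫⁻ ζ1 in Metric.ball (0:ℂ) r, ∫⁻ ζ2 in Metric.ball (0:ℂ) r,
        ‖F ![p0 + y * ζ0, p1 + y * ζ1, p2 + y * ζ2]‖ₑ ^ 2 := by
  have hm : MeasurableSet (Metric.ball (0:ℂ) r) := Metric.isOpen_ball.measurableSet
  have h00 : (0:ℂ) ∈ Metric.ball (0:ℂ) r := Metric.mem_ball_self hr
  set A := ENNReal.ofReal (Real.pi * r ^ 2)
  have s0 : ‖F ![p0, p1, p2]‖ₑ ^ 2 * A ≤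
      ∫⁻ ζ0 in Metric.ball (0:ℂ) r, ‖F ![p0 + y * ζ0, p1, p2]‖ₑ ^ 2 := by
    have := submean (fun ζ => F ![p0 + y * ζ, p1, p2]) r hr (hF.comp
      (differentiable_vec3 (by fun_prop) (by fun_prop) (by fun_prop)).differentiableOn
      fun ζ hζ => by simpa using hs ζ hζ 0 h00 0 h00)
    simpa using this
  have s1 : ∀ ζ0 ∈ Metric.ball (0:ℂ) r, ‖F ![p0 + y * ζ0, p1, p2]‖ₑ ^ 2 * A ≤
      ∫⁻ ζ1 in Metric.ball (0:ℂ) r, ‖F ![p0 + y * ζ0, p1 + y * ζ1, p2]‖ₑ ^ 2 := by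
    intro ζ0 h0
    have := submean (fun ζ => F ![p0 + y * ζ0, p1 + y * ζ, p2]) r hr (hF.comp
      (differentiable_vec3 (by fun_prop) (by fun_prop) (by fun_prop)).differentiableOn
      fun ζ hζ => by simpa using hs ζ0 h0 ζ hζ 0 h00)
    simpa using this
  have s2 : ∀ ζ0 ∈ Metric.ball (0:ℂ) r, ∀ ζ1 ∈ Metric.ball (0:ℂ) r,
      ‖F ![p0 + y * ζ0, p1 + y * ζ1, p2]‖ₑ ^ 2 * A ≤
      ∫⁻ ζ2 in Metric.ball (0:ℂ) r, ‖F ![p0 + y * ζ0, p1 + y * ζ1, p2 + y * ζ2]‖ₑ ^ 2 := by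
    intro ζ0 h0 ζ1 h1
    have := submean (fun ζ => F ![p0 + y * ζ0, p1 + y * ζ1, p2 + y * ζ]) r hr (hF.comp
      (differentiable_vec3 (by fun_prop) (by fun_prop) (by fun_prop)).differentiableOn
      fun ζ hζ => by simpa using hs ζ0 h0 ζ1 h1 ζ hζ)
    simpa using this
  have hA : A ≠ ⊤ := ENNReal.ofReal_ne_top
  calc ‖F ![p0, p1, p2]‖ₑ ^ 2 * A ^ 3 = ‖F ![p0, p1, p2]‖ₑ ^ 2 * A * A * A := by ring
    _ ≤ (∫⁻ ζ0 in Metric.ball (0:ℂ) r, ‖F ![p0 + y * ζ0, p1, p2]‖ₑ ^ 2) * A * A := by gcongr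
    _ = (∫⁻ ζ0 in Metric.ball (0:ℂ) r, ‖F ![p0 + y * ζ0, p1, p2]‖ₑ ^ 2 * A) * A := by
        rw [lintegral_mul_const' _ _ hA]
    _ ≤ (∫⁻ ζ0 in Metric.ball (0:ℂ) r, ∫⁻ ζ1 in Metric.ball (0:ℂ) r,
          ‖F ![p0 + y * ζ0, p1 + y * ζ1, p2]‖ₑ ^ 2) * A := by
        gcongr ?_ * A
        exact setLIntegral_mono' hm s1
    _ = (∫⁻ ζ0 in Metric.ball (0:ℂ) r, ∫⁻ ζ1 in Metric.ball (0:ℂ) r,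
          ‖F ![p0 + y * ζ0, p1 + y * ζ1, p2]‖ₑ ^ 2 * A) := by
        rw [← lintegral_mul_const' _ _ hA]
        refine lintegral_congr fun ζ0 => ?_
        rw [lintegral_mul_const' _ _ hA]
    _ ≤ _ := setLIntegral_mono' hm fun ζ0 h0 => setLIntegral_mono' hm fun ζ1 h1 => s2 ζ0 h0 ζ1 h1

lemma trans_ball (g : ℂ → ℝ≥0∞) (κ : ℂ) (hκ : ‖κ‖ ≤ 1 / 8) :
    ∫⁻ ζ in Metric.ball (0:ℂ) (1/8), g (κ + ζ) ≤ ∫⁻ ζ in Metric.ball (0:ℂ) (1/4), g ζ := by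
  rw [← lintegral_indicator Metric.isOpen_ball.measurableSet,
    ← lintegral_indicator Metric.isOpen_ball.measurableSet,
    ← lintegral_add_left_eq_self ((Metric.ball (0:ℂ) (1/4)).indicator g) κ]
  refine lintegral_mono fun ζ => ?_
  by_cases h : ζ ∈ Metric.ball (0:ℂ) (1/8)
  · rw [indicator_of_mem h, indicator_of_mem]
    rw [mem_ball_zero_iff] at h ⊢
    linarith [norm_add_le κ ζ]
  · rw [indicator_of_notMem h]; exact zero_le

lemma point_mem_T (x : ℂ) (hx : x.im = 0) (y : ℝ) (hy : 0 < y) (ζ0 ζ1 ζ2 : ℂ) (h0 : ‖ζ0‖ ≤ 1/4)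
    (h1 : ‖ζ1‖ ≤ 1/4) (h2 : ‖ζ2‖ ≤ 1/4) :
    ![x + y * (Complex.I + ζ0), y * ζ1, y * ζ2] ∈ TLambda3 := by
  rw [mem_TLambda3_iff]
  have a0 := abs_le.1 ((Complex.abs_im_le_norm ζ0).trans h0)
  have a1 := abs_le.1 ((Complex.abs_im_le_norm ζ1).trans h1)
  have a2 := abs_le.1 ((Complex.abs_im_le_norm ζ2).trans h2)
  simp [hx]
  refine ⟨mul_pos hy (by linarith), ?_⟩
  rw [mul_pow, mul_pow, mul_pow, ← mul_add]
  refine mul_lt_mul_of_pos_left ?_ (by positivity)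
  nlinarith

lemma box_pointwise {F : (Fin 3 → ℂ) → ℂ} (hF : DifferentiableOn ℂ F TLambda3) (m : ℕ) (x y : ℝ)
    (hy : 0 < y) :
    ‖Box^[m] F ![x + y * Complex.I, 0, 0]‖ₑ ^ 2 * ENNReal.ofReal (y ^ (4 * m)) ≤
      ENNReal.ofReal (((768 * ((m:ℝ) + 1) ^ 2) ^ m) ^ 2 * (64 / Real.pi) ^ 3) *
      ∫⁻ ζ0 in Metric.ball (0:ℂ) (1/4), ∫⁻ ζ1 in Metric.ball (0:ℂ) (1/4),
        ∫⁻ ζ2 in Metric.ball (0:ℂ) (1/4),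
        ‖F ![x + y * (Complex.I + ζ0), y * ζ1, y * ζ2]‖ₑ ^ 2 := by
  set J := ∫⁻ ζ0 in Metric.ball (0:ℂ) (1/4), ∫⁻ ζ1 in Metric.ball (0:ℂ) (1/4),
        ∫⁻ ζ2 in Metric.ball (0:ℂ) (1/4),
        ‖F ![x + y * (Complex.I + ζ0), y * ζ1, y * ζ2]‖ₑ ^ 2 with hJ
  have hpi := Real.pi_pos
  rcases eq_or_ne J ⊤ with hT | hT
  · rw [hT, ENNReal.mul_top]
    · exact le_top
    · simp only [ne_eq, ENNReal.ofReal_eq_zero, not_le]; positivity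
  set z0 : Fin 3 → ℂ := ![x + y * Complex.I, 0, 0] with hz0
  -- pointwise bound
  have hrep : ∀ w ∈ Metric.closedBall z0 (y / 8), ∃ κ0 κ1 κ2 : ℂ, ‖κ0‖ ≤ 1/8 ∧ ‖κ1‖ ≤ 1/8 ∧
      ‖κ2‖ ≤ 1/8 ∧ w = ![x + y * (Complex.I + κ0), y * κ1, y * κ2] := by
    intro w hw
    rw [Metric.mem_closedBall, dist_eq_norm] at hw
    have hc : ∀ i, ‖(w i - z0 i) / y‖ ≤ 1/8 := by
      intro i
      rw [norm_div, Complex.norm_real, Real.norm_of_nonneg hy.le, div_le_iff₀ hy]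
      have := (norm_le_pi_norm (w - z0) i).trans hw
      simp only [Pi.sub_apply] at this
      linarith
    have hyc : (y:ℂ) ≠ 0 := by exact_mod_cast hy.ne'
    refine ⟨_, _, _, hc 0, hc 1, hc 2, ?_⟩
    ext i
    fin_cases i
    · simp [hz0]; field_simp; ring
    · simp [hz0]; field_simp
    · simp [hz0]; field_simp
  have hsubT : Metric.closedBall z0 (y / 8) ⊆ TLambda3 := by
    intro w hw
    obtain ⟨κ0, κ1, κ2, h0, h1, h2, rfl⟩ := hrep w hw
    exact point_mem_T x (by simp) y hy _ _ _ (by linarith) (by linarith) (by linarith)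
  have hbd : ∀ w ∈ Metric.closedBall z0 (y / 8), ‖F w‖ ^ 2 ≤ (64 / Real.pi) ^ 3 * J.toReal := by
    intro w hw
    obtain ⟨κ0, κ1, κ2, h0, h1, h2, rfl⟩ := hrep w hw
    have h3 := submean3 hF (x + y * (Complex.I + κ0)) (y * κ1) (y * κ2) y (1/8) (by norm_num) ?_
    · have h4 : ‖F ![x + y * (Complex.I + κ0), y * κ1, y * κ2]‖ₑ ^ 2 *
          ENNReal.ofReal (Real.pi * (1/8) ^ 2) ^ 3 ≤ J := by
        refine h3.trans ?_
        simp only [add_assoc, ← mul_add]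
        calc _ ≤ ∫⁻ ζ0 in Metric.ball (0:ℂ) (1/8), ∫⁻ ζ1 in Metric.ball (0:ℂ) (1/8),
                  ∫⁻ ζ2 in Metric.ball (0:ℂ) (1/4),
                  ‖F ![x + y * (Complex.I + (κ0 + ζ0)), y * (κ1 + ζ1), y * ζ2]‖ₑ ^ 2 :=
                lintegral_mono fun ζ0 => lintegral_mono fun ζ1 =>
                  trans_ball (fun ζ2 => ‖F ![x + y * (Complex.I + (κ0 + ζ0)), y * (κ1 + ζ1), y * ζ2]‖ₑ ^ 2) κ2 h2
          _ ≤ ∫⁻ ζ0 in Metric.ball (0:ℂ) (1/8), ∫⁻ ζ1 in Metric.ball (0:ℂ) (1/4),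
                  ∫⁻ ζ2 in Metric.ball (0:ℂ) (1/4),
                  ‖F ![x + y * (Complex.I + (κ0 + ζ0)), y * ζ1, y * ζ2]‖ₑ ^ 2 :=
                lintegral_mono fun ζ0 => trans_ball (fun ζ1 => ∫⁻ ζ2 in Metric.ball (0:ℂ) (1/4),
                  ‖F ![x + y * (Complex.I + (κ0 + ζ0)), y * ζ1, y * ζ2]‖ₑ ^ 2) κ1 h1
          _ ≤ J := trans_ball (fun ζ0 => ∫⁻ ζ1 in Metric.ball (0:ℂ) (1/4),
                  ∫⁻ ζ2 in Metric.ball (0:ℂ) (1/4),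
                  ‖F ![x + y * (Complex.I + ζ0), y * ζ1, y * ζ2]‖ₑ ^ 2) κ0 h0
      have h5 := ENNReal.toReal_mono hT h4
      rw [ENNReal.toReal_mul, ENNReal.toReal_pow, ENNReal.toReal_pow, toReal_enorm,
        ENNReal.toReal_ofReal (by positivity)] at h5
      set Q := ‖F ![x + y * (Complex.I + κ0), y * κ1, y * κ2]‖ ^ 2
      have : Q = (64 / Real.pi) ^ 3 * (Q * (Real.pi * (1/8) ^ 2) ^ 3) := by field_simp; norm_num
      rw [this]
      gcongr
    · intro ζ0 g0 ζ1 g1 ζ2 g2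
      rw [mem_ball_zero_iff] at g0 g1 g2
      have := point_mem_T x (by simp) y hy (κ0 + ζ0) (κ1 + ζ1) (κ2 + ζ2)
        (by linarith [norm_add_le κ0 ζ0]) (by linarith [norm_add_le κ1 ζ1])
        (by linarith [norm_add_le κ2 ζ2])
      simpa only [mul_add, add_assoc] using this
  have hm1 : (0:ℝ) < (m:ℝ) + 1 := by positivity
  set δ := y / (16 * ((m:ℝ) + 1)) with hδ
  have hδ0 : 0 < δ := by positivity
  have hrad : 0 + 2 * (m:ℝ) * δ ≤ y / 8 := by
    rw [hδ, zero_add, mul_div_assoc', div_le_div_iff₀ (by positivity) (by norm_num)]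
    nlinarith
  set M := Real.sqrt ((64 / Real.pi) ^ 3 * J.toReal) with hM
  have hsubr := Metric.closedBall_subset_closedBall (x := z0) hrad
  have hB := Box_iter_bound isOpen_TLambda3 hδ0 m (R := 0) (M := M) hF (hsubr.trans hsubT)
    (fun w hw => Real.le_sqrt_of_sq_le (hbd w (hsubr hw))) z0 (Metric.mem_closedBall_self le_rfl)
  have hM2 : M ^ 2 = (64 / Real.pi) ^ 3 * J.toReal := Real.sq_sqrt (by positivity)
  have hfin : ‖Box^[m] F z0‖ ^ 2 * y ^ (4 * m) ≤
      (((768 * ((m:ℝ) + 1) ^ 2) ^ m) ^ 2 * (64 / Real.pi) ^ 3) * J.toReal := by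
    calc ‖Box^[m] F z0‖ ^ 2 * y ^ (4 * m) ≤ ((3 / δ ^ 2) ^ m * M) ^ 2 * y ^ (4 * m) := by gcongr
      _ = ((3 / δ ^ 2 * y ^ 2) ^ m) ^ 2 * M ^ 2 := by
          rw [mul_pow (3 / δ ^ 2), ← pow_mul y]; ring
      _ = _ := by
          rw [hM2]
          have : 3 / δ ^ 2 * y ^ 2 = 768 * ((m:ℝ) + 1) ^ 2 := by
            rw [hδ]; field_simp; norm_num
          rw [this]; ring
  rw [← ENNReal.ofReal_toReal hT, ← ENNReal.ofReal_mul (by positivity), ← ofReal_norm,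
    ← ENNReal.ofReal_pow (norm_nonneg _), ← ENNReal.ofReal_mul (by positivity)]
  exact ENNReal.ofReal_le_ofReal hfin


@[fun_prop]
lemma measurable_rvec3 {α : Type*} [MeasurableSpace α] {a b c : α → ℝ} (ha : Measurable a)
    (hb : Measurable b) (hc : Measurable c) : Measurable (fun t => ![a t, b t, c t]) := by
  rw [measurable_pi_iff]
  intro i; fin_cases i <;> simpa

lemma lintegral_fin3 (g : (Fin 3 → ℝ) → ℝ≥0∞) (hg : Measurable g) :
    ∫⁻ x, g x = ∫⁻ a : ℝ, ∫⁻ b : ℝ, ∫⁻ c : ℝ, g ![a, b, c] := by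
  have h1 := (volume_preserving_piFinSuccAbove (fun _ : Fin 3 => ℝ) 0).symm
  have h2 := (volume_preserving_finTwoArrow ℝ).symm
  rw [← h1.lintegral_comp hg, Measure.volume_eq_prod, lintegral_prod _ (by fun_prop)]
  refine lintegral_congr fun a => ?_
  rw [← h2.lintegral_comp (by fun_prop), Measure.volume_eq_prod, lintegral_prod _ (by fun_prop)]
  refine lintegral_congr fun b => lintegral_congr fun c => ?_
  congr 1
  ext i
  fin_cases i <;> rfl

lemma lintegral_complex (g : ℂ → ℝ≥0∞) (hg : Measurable g) :
    ∫⁻ z, g z = ∫⁻ b : ℝ, ∫⁻ a : ℝ, g (a + b * Complex.I) := by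
  have h1 := (Complex.volume_preserving_equiv_real_prod).symm
  rw [← h1.lintegral_comp hg, Measure.volume_eq_prod, lintegral_prod_symm _ (by fun_prop)]
  refine lintegral_congr fun b => lintegral_congr fun c => ?_
  congr 1
  apply Complex.ext <;> simp

lemma lintegral_scale (g : ℝ → ℝ≥0∞) (hg : Measurable g) (y : ℝ) (hy : y ≠ 0) :
    ∫⁻ a : ℝ, g (y * a) = ENNReal.ofReal |y⁻¹| * ∫⁻ a, g a := by
  rw [← lintegral_map (f := g) hg (measurable_const_mul y), Real.map_volume_mul_left hy,
    lintegral_smul_measure, smul_eq_mul]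

lemma ball_le_strip (g : ℂ → ℝ≥0∞) (hg : Measurable g) (r : ℝ) :
    ∫⁻ ζ in Metric.ball (0:ℂ) r, g ζ ≤ ∫⁻ b in Ioo (-r) r, ∫⁻ a : ℝ, g (a + b * Complex.I) := by
  have hm : MeasurableSet {z : ℂ | z.im ∈ Ioo (-r) r} :=
    Complex.measurable_im measurableSet_Ioo
  calc ∫⁻ ζ in Metric.ball (0:ℂ) r, g ζ ≤ ∫⁻ ζ in {z : ℂ | z.im ∈ Ioo (-r) r}, g ζ := by
        apply lintegral_mono_set
        intro z hz
        rw [mem_ball_zero_iff] at hz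
        exact abs_lt.1 ((Complex.abs_im_le_norm z).trans_lt hz)
    _ = _ := by
        rw [← lintegral_indicator hm, lintegral_complex _ (hg.indicator hm),
          ← lintegral_indicator measurableSet_Ioo]
        refine lintegral_congr fun b => ?_
        by_cases hb : b ∈ Ioo (-r) r
        · rw [indicator_of_mem hb]
          refine lintegral_congr fun a => ?_
          rw [indicator_of_mem]
          simpa using hb
        · rw [indicator_of_notMem hb]
          rw [← lintegral_zero]
          refine lintegral_congr fun a => ?_
          rw [indicator_of_notMem]
          simpa using hb

lemma swap_l {μ ν : Measure ℝ} [SFinite μ] [SFinite ν] (f : ℝ → ℝ → ℝ≥0∞)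
    (hf : Measurable (fun p : ℝ × ℝ => f p.1 p.2)) :
    ∫⁻ x, ∫⁻ y, f x y ∂ν ∂μ = ∫⁻ y, ∫⁻ x, f x y ∂μ ∂ν :=
  lintegral_lintegral_swap hf.aemeasurable

lemma ball3_le (h : ℂ → ℂ → ℂ → ℝ≥0∞)
    (hh : Measurable (fun p : ℂ × ℂ × ℂ => h p.1 p.2.1 p.2.2)) (r : ℝ) :
    ∫⁻ ζ0 in Metric.ball (0:ℂ) r, ∫⁻ ζ1 in Metric.ball (0:ℂ) r, ∫⁻ ζ2 in Metric.ball (0:ℂ) r,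
      h ζ0 ζ1 ζ2 ≤ 
    ∫⁻ b0 in Ioo (-r) r, ∫⁻ b1 in Ioo (-r) r, ∫⁻ b2 in Ioo (-r) r,
      ∫⁻ a0 : ℝ, ∫⁻ a1 : ℝ, ∫⁻ a2 : ℝ,
      h (a0 + b0 * Complex.I) (a1 + b1 * Complex.I) (a2 + b2 * Complex.I) := by
  have hc : ∀ {α : Type} [MeasurableSpace α] (f0 f1 f2 : α → ℂ), Measurable f0 → Measurable f1 →
      Measurable f2 → Measurable (fun t => h (f0 t) (f1 t) (f2 t)) := by
    intro α _ f0 f1 f2 h0 h1 h2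
    exact hh.comp (h0.prodMk (h1.prodMk h2))
  calc _ ≤ ∫⁻ ζ0 in Metric.ball (0:ℂ) r, ∫⁻ ζ1 in Metric.ball (0:ℂ) r, ∫⁻ b2 in Ioo (-r) r,
            ∫⁻ a2 : ℝ, h ζ0 ζ1 (a2 + b2 * Complex.I) :=
          lintegral_mono fun ζ0 => lintegral_mono fun ζ1 => ball_le_strip _ (hc _ _ _
            (by fun_prop) (by fun_prop) (by fun_prop)) r
    _ ≤ ∫⁻ ζ0 in Metric.ball (0:ℂ) r, ∫⁻ b1 in Ioo (-r) r, ∫⁻ a1 : ℝ, ∫⁻ b2 in Ioo (-r) r,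
            ∫⁻ a2 : ℝ, h ζ0 (a1 + b1 * Complex.I) (a2 + b2 * Complex.I) := by
          refine lintegral_mono fun ζ0 => ball_le_strip (fun ζ1 => ∫⁻ b2 in Ioo (-r) r,
            ∫⁻ a2 : ℝ, h ζ0 ζ1 (a2 + b2 * Complex.I)) ?_ r
          refine Measurable.lintegral_prod_right' (f := fun p : ℂ × ℝ => 
            ∫⁻ a2 : ℝ, h ζ0 p.1 (a2 + p.2 * Complex.I)) ?_
          refine Measurable.lintegral_prod_right' (f := fun p : (ℂ × ℝ) × ℝ => 
            h ζ0 p.1.1 (p.2 + p.1.2 * Complex.I)) ?_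
          exact hc _ _ _ (by fun_prop) (by fun_prop) (by fun_prop)
    _ ≤ ∫⁻ b0 in Ioo (-r) r, ∫⁻ a0 : ℝ, ∫⁻ b1 in Ioo (-r) r, ∫⁻ a1 : ℝ, ∫⁻ b2 in Ioo (-r) r,
            ∫⁻ a2 : ℝ, h (a0 + b0 * Complex.I) (a1 + b1 * Complex.I) (a2 + b2 * Complex.I) := by
          refine ball_le_strip (fun ζ0 => ∫⁻ b1 in Ioo (-r) r, ∫⁻ a1 : ℝ, ∫⁻ b2 in Ioo (-r) r,
            ∫⁻ a2 : ℝ, h ζ0 (a1 + b1 * Complex.I) (a2 + b2 * Complex.I)) ?_ r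
          refine Measurable.lintegral_prod_right' (f := fun p : ℂ × ℝ => 
            ∫⁻ a1 : ℝ, ∫⁻ b2 in Ioo (-r) r, ∫⁻ a2 : ℝ, h p.1 (a1 + p.2 * Complex.I) (a2 + b2 * Complex.I)) ?_
          refine Measurable.lintegral_prod_right' (f := fun p : (ℂ × ℝ) × ℝ => 
            ∫⁻ b2 in Ioo (-r) r, ∫⁻ a2 : ℝ, h p.1.1 (p.2 + p.1.2 * Complex.I) (a2 + b2 * Complex.I)) ?_
          refine Measurable.lintegral_prod_right' (f := fun p : ((ℂ × ℝ) × ℝ) × ℝ => 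
            ∫⁻ a2 : ℝ, h p.1.1.1 (p.1.2 + p.1.1.2 * Complex.I) (a2 + p.2 * Complex.I)) ?_
          refine Measurable.lintegral_prod_right' (f := fun p : (((ℂ × ℝ) × ℝ) × ℝ) × ℝ => 
            h p.1.1.1.1 (p.1.1.2 + p.1.1.1.2 * Complex.I) (p.2 + p.1.2 * Complex.I)) ?_
          exact hc _ _ _ (by fun_prop) (by fun_prop) (by fun_prop)
    _ = ∫⁻ b0 in Ioo (-r) r, ∫⁻ a0 : ℝ, ∫⁻ b1 in Ioo (-r) r, ∫⁻ b2 in Ioo (-r) r, ∫⁻ a1 : ℝ,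
            ∫⁻ a2 : ℝ, h (a0 + b0 * Complex.I) (a1 + b1 * Complex.I) (a2 + b2 * Complex.I) := by
          refine lintegral_congr fun b0 => lintegral_congr fun a0 => lintegral_congr fun b1 => ?_
          refine swap_l _ ?_
          refine Measurable.lintegral_prod_right' (f := fun p : (ℝ × ℝ) × ℝ => 
            h (a0 + b0 * Complex.I) (p.1.1 + b1 * Complex.I) (p.2 + p.1.2 * Complex.I)) ?_
          exact hc _ _ _ (by fun_prop) (by fun_prop) (by fun_prop)
    _ = ∫⁻ b0 in Ioo (-r) r, ∫⁻ b1 in Ioo (-r) r, ∫⁻ a0 : ℝ, ∫⁻ b2 in Ioo (-r) r, ∫⁻ a1 : ℝ,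
            ∫⁻ a2 : ℝ, h (a0 + b0 * Complex.I) (a1 + b1 * Complex.I) (a2 + b2 * Complex.I) := by
          refine lintegral_congr fun b0 => ?_
          refine swap_l _ ?_
          refine Measurable.lintegral_prod_right' (f := fun p : (ℝ × ℝ) × ℝ => ∫⁻ a1 : ℝ,
            ∫⁻ a2 : ℝ, 
            h (p.1.1 + b0 * Complex.I) (a1 + p.1.2 * Complex.I) (a2 + p.2 * Complex.I)) ?_
          refine Measurable.lintegral_prod_right' (f := fun p : ((ℝ × ℝ) × ℝ) × ℝ =>
            ∫⁻ a2 : ℝ, 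
            h (p.1.1.1 + b0 * Complex.I) (p.2 + p.1.1.2 * Complex.I) (a2 + p.1.2 * Complex.I)) ?_
          refine Measurable.lintegral_prod_right' (f := fun p : (((ℝ × ℝ) × ℝ) × ℝ) × ℝ =>
            h (p.1.1.1.1 + b0 * Complex.I) (p.1.2 + p.1.1.1.2 * Complex.I) (p.2 + p.1.1.2 * Complex.I)) ?_
          exact hc _ _ _ (by fun_prop) (by fun_prop) (by fun_prop)
    _ = _ := by
          refine lintegral_congr fun b0 => lintegral_congr fun b1 => ?_
          refine swap_l _ ?_
          refine Measurable.lintegral_prod_right' (f := fun p : (ℝ × ℝ) × ℝ => 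
            ∫⁻ a2 : ℝ, 
            h (p.1.1 + b0 * Complex.I) (p.2 + b1 * Complex.I) (a2 + p.1.2 * Complex.I)) ?_
          refine Measurable.lintegral_prod_right' (f := fun p : ((ℝ × ℝ) × ℝ) × ℝ =>
            h (p.1.1.1 + b0 * Complex.I) (p.1.2 + b1 * Complex.I) (p.2 + p.1.1.2 * Complex.I)) ?_
          exact hc _ _ _ (by fun_prop) (by fun_prop) (by fun_prop)

lemma hardy_slice {F : (Fin 3 → ℂ) → ℂ} (hF : Measurable F) (y0 y1 y2 : ℝ)
    (hy : 0 < y0) (hy2 : y1 ^ 2 + y2 ^ 2 < y0 ^ 2) :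
    ∫⁻ a0 : ℝ, ∫⁻ a1 : ℝ, ∫⁻ a2 : ℝ,
      ‖F ![a0 + y0 * Complex.I, a1 + y1 * Complex.I, a2 + y2 * Complex.I]‖ₑ ^ 2
      ≤ hardyNormSq F := by
  have hmem : ![y0, y1, y2] ∈ Lambda3 := by
    rw [mem_Lambda3_iff]; exact ⟨hy, hy2⟩
  refine le_trans ?_ (le_iSup₂ (f := fun (y : Fin 3 → ℝ) (_ : y ∈ Lambda3) => 
    ∫⁻ x : Fin 3 → ℝ, (‖F (fun i => (x i : ℂ) + (y i : ℂ) * Complex.I)‖₊ : ℝ≥0∞) ^ 2) ![y0, y1, y2] hmem)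
  rw [lintegral_fin3 _ (by fun_prop)]
  refine le_of_eq (lintegral_congr fun a => lintegral_congr fun b => lintegral_congr fun c => ?_)
  have : (fun i => ((![a, b, c] i : ℝ) : ℂ) + ((![y0, y1, y2] i : ℝ) : ℂ) * Complex.I) = 
    ![a + y0 * Complex.I, b + y1 * Complex.I, c + y2 * Complex.I] := by
    ext i; fin_cases i <;> rfl
  rw [this]; rfl


lemma cone_add {b0 b1 b2 c0 c1 c2 : ℝ} (hb0 : 0 ≤ b0) (hb : b1^2+b2^2 ≤ b0^2) (hc0 : 0 < c0)
    (hc : c1^2+c2^2 < c0^2) : 0 < b0 + c0 ∧ (b1+c1)^2+(b2+c2)^2 < (b0+c0)^2 := by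
  refine ⟨by linarith, ?_⟩
  have h : b1 * c1 + b2 * c2 ≤ b0 * c0 := by
    apply le_of_sq_le_sq _ (by positivity)
    calc (b1 * c1 + b2 * c2)^2 ≤ (b1^2+b2^2) * (c1^2+c2^2) := by nlinarith [sq_nonneg (b1*c2-b2*c1)]
      _ ≤ b0^2 * c0^2 := by gcongr
      _ = _ := by ring
  nlinarith

lemma lintegral_affine (g : ℝ → ℝ≥0∞) (hg : Measurable g) (c y : ℝ) (hy : y ≠ 0) :
    ∫⁻ a : ℝ, g (c + y * a) = ENNReal.ofReal |y⁻¹| * ∫⁻ a, g a := by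
  rw [lintegral_scale (fun t => g (c + t)) (by fun_prop) y hy, lintegral_add_left_eq_self]

lemma affine3 (g : ℝ → ℝ → ℝ → ℝ≥0∞)
    (hg : Measurable (fun p : ℝ × ℝ × ℝ => g p.1 p.2.1 p.2.2)) (c0 c1 c2 y : ℝ) (hy : y ≠ 0) :
    ∫⁻ a0 : ℝ, ∫⁻ a1 : ℝ, ∫⁻ a2 : ℝ, g (c0 + y * a0) (c1 + y * a1) (c2 + y * a2) =
      ENNReal.ofReal |y⁻¹| ^ 3 * ∫⁻ a0 : ℝ, ∫⁻ a1 : ℝ, ∫⁻ a2 : ℝ, g a0 a1 a2 := by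
  have hc : ∀ {α : Type} [MeasurableSpace α] (f0 f1 f2 : α → ℝ), Measurable f0 → Measurable f1 →
      Measurable f2 → Measurable (fun t => g (f0 t) (f1 t) (f2 t)) := by
    intro α _ f0 f1 f2 h0 h1 h2
    exact hg.comp (h0.prodMk (h1.prodMk h2))
  have e1 : ∀ s t, ∫⁻ a2 : ℝ, g s t (c2 + y * a2) = ENNReal.ofReal |y⁻¹| * ∫⁻ a2, g s t a2 :=
    fun s t => lintegral_affine (fun a => g s t a) (hc (fun _ => s) (fun _ => t) (fun a => a) (by fun_prop) (by fun_prop) (by fun_prop)) _ _ hy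
  have m1 : ∀ s, Measurable fun t => ∫⁻ a2, g s t a2 := fun s =>
    Measurable.lintegral_prod_right' (f := fun p : ℝ × ℝ => g s p.1 p.2)
      (hc _ _ _ (by fun_prop) (by fun_prop) (by fun_prop))
  have e2 : ∀ s, ∫⁻ a1 : ℝ, ∫⁻ a2, g s (c1 + y * a1) a2 =
      ENNReal.ofReal |y⁻¹| * ∫⁻ a1, ∫⁻ a2, g s a1 a2 :=
    fun s => lintegral_affine _ (m1 s) _ _ hy
  have m2 : Measurable fun s => ∫⁻ a1, ∫⁻ a2, g s a1 a2 := by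
    refine Measurable.lintegral_prod_right' (f := fun p : ℝ × ℝ => ∫⁻ a2, g p.1 p.2 a2) ?_
    refine Measurable.lintegral_prod_right' (f := fun p : (ℝ × ℝ) × ℝ => g p.1.1 p.1.2 p.2) ?_
    exact hc _ _ _ (by fun_prop) (by fun_prop) (by fun_prop)
  have e3 := lintegral_affine _ m2 c0 y hy
  simp only [e1]
  simp_rw [lintegral_const_mul' _ _ ENNReal.ofReal_ne_top, e2,
    lintegral_const_mul' _ _ ENNReal.ofReal_ne_top, e3]
  ring

lemma hardy_bound {F : (Fin 3 → ℂ) → ℂ} (hFm : Measurable F) (hF : DifferentiableOn ℂ F TLambda3)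
    (hH : hardyNormSq F < ⊤) (ε : ℝ) (hε : 0 < ε) :
    ∃ M : ℝ, 0 ≤ M ∧ ∀ p0 p1 p2 : ℂ, 0 ≤ p0.im → p1.im ^ 2 + p2.im ^ 2 ≤ p0.im ^ 2 →
      ‖F ![p0 + ε * Complex.I, p1, p2]‖ ^ 2 ≤ M := by
  set A := ENNReal.ofReal (Real.pi * (1/4) ^ 2) ^ 3 with hA
  set B := (volume (Ioo (-(1/4):ℝ) (1/4))) ^ 3 * (ENNReal.ofReal |ε⁻¹| ^ 3 * hardyNormSq F) with hB
  have hBt : B ≠ ⊤ := by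
    rw [hB, Real.volume_Ioo]
    exact ENNReal.mul_ne_top (ENNReal.pow_ne_top ENNReal.ofReal_ne_top) (ENNReal.mul_ne_top
      (ENNReal.pow_ne_top ENNReal.ofReal_ne_top) hH.ne)
  have key : ∀ p0 p1 p2 : ℂ, 0 ≤ p0.im → p1.im ^ 2 + p2.im ^ 2 ≤ p0.im ^ 2 →
      ‖F ![p0 + ε * Complex.I, p1, p2]‖ₑ ^ 2 * A ≤ B := by
    intro p0 p1 p2 h0 h1
    have hs := submean3 hF (p0 + ε * Complex.I) p1 p2 ε (1/4) (by norm_num) ?_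
    · refine hs.trans ((ball3_le (fun ζ0 ζ1 ζ2 =>
        ‖F ![p0 + ε * Complex.I + ε * ζ0, p1 + ε * ζ1, p2 + ε * ζ2]‖ₑ ^ 2) (by fun_prop) _).trans ?_)
      have inner : ∀ b0 ∈ Ioo (-(1/4):ℝ) (1/4), ∀ b1 ∈ Ioo (-(1/4):ℝ) (1/4),
          ∀ b2 ∈ Ioo (-(1/4):ℝ) (1/4),
          ∫⁻ a0 : ℝ, ∫⁻ a1 : ℝ, ∫⁻ a2 : ℝ, ‖F ![p0 + ε * Complex.I + ε * (a0 + b0 * Complex.I),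
            p1 + ε * (a1 + b1 * Complex.I), p2 + ε * (a2 + b2 * Complex.I)]‖ₑ ^ 2 ≤
          ENNReal.ofReal |ε⁻¹| ^ 3 * hardyNormSq F := by
        intro b0 hb0 b1 hb1 b2 hb2
        have hcone := cone_add (b0 := p0.im) (b1 := p1.im) (b2 := p2.im) (c0 := ε + ε * b0)
          (c1 := ε * b1) (c2 := ε * b2) h0 h1 (by nlinarith [hb0.1]) (by
            have : ε + ε * b0 = ε * (1 + b0) := by ring
            rw [this, mul_pow, mul_pow, mul_pow, ← mul_add]
            refine mul_lt_mul_of_pos_left ?_ (by positivity)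
            nlinarith [hb0.1, hb0.2, hb1.1, hb1.2, hb2.1, hb2.2])
        have hsl := hardy_slice hFm _ _ _ hcone.1 hcone.2
        have := affine3 (fun a0 a1 a2 => ‖F ![a0 + (p0.im + (ε + ε * b0) : ℝ) * Complex.I,
          a1 + (p1.im + ε * b1 : ℝ) * Complex.I, a2 + (p2.im + ε * b2 : ℝ) * Complex.I]‖ₑ ^ 2)
          (by fun_prop) p0.re p1.re p2.re ε hε.ne'
        calc _ = _ := by
              refine lintegral_congr fun a0 => lintegral_congr fun a1 => lintegral_congr fun a2 => ?_
              congr 4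
              · conv_lhs => rw [← Complex.re_add_im p0]
                push_cast; ring
              · conv_lhs => rw [← Complex.re_add_im p1]
                push_cast
                congr 1
                · ring
                · conv_lhs => rw [← Complex.re_add_im p2]
                  congr 1
                  ring
          _ = _ := this
          _ ≤ _ := by gcongr
      calc _ ≤ ∫⁻ b0 in Ioo (-(1/4):ℝ) (1/4), ∫⁻ b1 in Ioo (-(1/4):ℝ) (1/4),
            ∫⁻ b2 in Ioo (-(1/4):ℝ) (1/4), ENNReal.ofReal |ε⁻¹| ^ 3 * hardyNormSq F :=
            setLIntegral_mono' measurableSet_Ioo fun b0 hb0 =>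
            setLIntegral_mono' measurableSet_Ioo fun b1 hb1 =>
            setLIntegral_mono' measurableSet_Ioo fun b2 hb2 => inner b0 hb0 b1 hb1 b2 hb2
        _ = B := by
            simp only [setLIntegral_const, hB]; ring
        _ ≤ B := le_rfl
    · intro ζ0 g0 ζ1 g1 ζ2 g2
      rw [mem_ball_zero_iff] at g0 g1 g2
      have a0 := abs_le.1 ((Complex.abs_im_le_norm ζ0).trans g0.le)
      have a1 := abs_le.1 ((Complex.abs_im_le_norm ζ1).trans g1.le)
      have a2 := abs_le.1 ((Complex.abs_im_le_norm ζ2).trans g2.le)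
      have hcone := cone_add (b0 := p0.im) (b1 := p1.im) (b2 := p2.im) (c0 := ε + ε * ζ0.im)
          (c1 := ε * ζ1.im) (c2 := ε * ζ2.im) h0 h1 (by nlinarith [a0.1]) (by
            have : ε + ε * ζ0.im = ε * (1 + ζ0.im) := by ring
            rw [this, mul_pow, mul_pow, mul_pow, ← mul_add]
            refine mul_lt_mul_of_pos_left ?_ (by positivity)
            nlinarith [a0.1, a0.2, a1.1, a1.2, a2.1, a2.2])
      rw [mem_TLambda3_iff]
      simpa [add_assoc] using hcone
  have hpi := Real.pi_pos
  refine ⟨B.toReal / A.toReal, by positivity, fun p0 p1 p2 h0 h1 => ?_⟩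
  have hAr : 0 < A.toReal := by
    rw [hA, ENNReal.toReal_pow, ENNReal.toReal_ofReal (by positivity)]; positivity
  rw [le_div_iff₀ hAr]
  have := ENNReal.toReal_mono hBt (key p0 p1 p2 h0 h1)
  rwa [ENNReal.toReal_mul, ENNReal.toReal_pow, toReal_enorm] at this


/-- regularised function -/
def Freg (F : (Fin 3 → ℂ) → ℂ) (ε : ℝ) (z0 z1 z2 : ℂ) : ℂ :=
  F ![z0 + ε * Complex.I, z1, z2] * (1 - ε * z0 * Complex.I)⁻¹

lemma Freg_measurable {F : (Fin 3 → ℂ) → ℂ} (hFm : Measurable F) (ε : ℝ) {α : Type*}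
    [MeasurableSpace α] {f0 f1 f2 : α → ℂ} (h0 : Measurable f0) (h1 : Measurable f1)
    (h2 : Measurable f2) : Measurable (fun t => Freg F ε (f0 t) (f1 t) (f2 t)) := by
  unfold Freg; fun_prop

lemma den_lower (ε : ℝ) (hε : 0 < ε) (w : ℂ) (hw : 0 ≤ w.im) :
    1 + ε ^ 2 * ‖w‖ ^ 2 ≤ ‖1 - ε * w * Complex.I‖ ^ 2 := by
  rw [← Complex.normSq_eq_norm_sq, ← Complex.normSq_eq_norm_sq, Complex.normSq_apply,
    Complex.normSq_apply]
  simp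
  nlinarith [mul_nonneg hε.le hw]

lemma Freg_norm_le (F : (Fin 3 → ℂ) → ℂ) (ε : ℝ) (hε : 0 < ε) (z0 z1 z2 : ℂ) (h : 0 ≤ z0.im) :
    ‖Freg F ε z0 z1 z2‖ₑ ≤ ‖F ![z0 + ε * Complex.I, z1, z2]‖ₑ := by
  rw [enorm_le_iff_norm_le, Freg, norm_mul, norm_inv]
  have := den_lower ε hε z0 h
  have h1 : 1 ≤ ‖1 - ε * z0 * Complex.I‖ := by
    have h2 : (0:ℝ) ≤ ε ^ 2 * ‖z0‖ ^ 2 := by positivity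
    have h3 := norm_nonneg (1 - ε * z0 * Complex.I)
    nlinarith
  exact mul_le_of_le_one_right (norm_nonneg _) (inv_le_one_of_one_le₀ h1)

lemma slice_ray {F : (Fin 3 → ℂ) → ℂ} (hFm : Measurable F) (hF : DifferentiableOn ℂ F TLambda3)
    (hH : hardyNormSq F < ⊤) (ε : ℝ) (hε : 0 < ε) (b0 b1 b2 : ℝ) (h0 : |b0| < 1/4)
    (h1 : |b1| < 1/4) (h2 : |b2| < 1/4) (σ : ℂ) (hσ : 0 < σ.im) (x q : ℝ) :
    ∫⁻ y in Ioi (0:ℝ), ‖Freg F ε (x + y * σ * (1 + b0)) (y * σ * b1) (q + y * σ * b2)‖ₑ ^ 2 ≤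
      ENNReal.ofReal (‖σ‖⁻¹) *
        ∫⁻ s : ℝ, ‖Freg F ε (x + s * (1 + b0)) (s * b1) (q + s * b2)‖ₑ ^ 2 := by
  obtain ⟨M, hM0, hM⟩ := hardy_bound hFm hF hH ε hε
  rw [abs_lt] at h0 h1 h2
  have hk : 0 < 1 + b0 := by linarith
  have hcone : b1 ^ 2 + b2 ^ 2 ≤ (1 + b0) ^ 2 := by nlinarith
  have him : ∀ ζ : ℂ, 0 ≤ ζ.im → 0 ≤ ((x:ℂ) + ζ * (1 + b0)).im := by
    intro ζ hζ
    simp; nlinarith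
  have hcone2 : ∀ ζ : ℂ, 0 ≤ ζ.im → (ζ * b1).im ^ 2 + ((q:ℂ) + ζ * b2).im ^ 2 ≤
      ((x:ℂ) + ζ * (1 + b0)).im ^ 2 := by
    intro ζ hζ
    simp
    rw [mul_pow, mul_pow, mul_pow, ← mul_add]
    exact mul_le_mul_of_nonneg_left hcone (by positivity)
  have hne : ∀ ζ : ℂ, 0 ≤ ζ.im → 1 - ε * (x + ζ * (1 + b0)) * Complex.I ≠ 0 := by
    intro ζ hζ h
    have := den_lower ε hε _ (him ζ hζ)
    rw [h] at this
    have h2 : (0:ℝ) ≤ ε ^ 2 * ‖(x:ℂ) + ζ * (1 + b0)‖ ^ 2 := by positivity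
    simp at this
    linarith
  have hd : DifferentiableOn ℂ (fun ζ : ℂ => Freg F ε (x + ζ * (1 + b0)) (ζ * b1) (q + ζ * b2))
      {z | 0 ≤ z.im} := by
    unfold Freg
    refine DifferentiableOn.mul ?_ (DifferentiableOn.inv (by fun_prop) hne)
    refine hF.comp (differentiable_vec3 (by fun_prop) (by fun_prop) (by fun_prop)).differentiableOn ?_
    intro ζ hζ
    have := cone_add (him ζ hζ) (hcone2 ζ hζ) (c0 := ε) (c1 := 0) (c2 := 0) hε (by simp; positivity)
    rw [mem_TLambda3_iff]
    simpa using this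
  refine ray_bound (fun ζ : ℂ => Freg F ε (x + ζ * (1 + b0)) (ζ * b1) (q + ζ * b2))
    (M * (1 + 2 * x ^ 2 / (1 + b0) ^ 2 + 2 / ((1 + b0) ^ 2 * ε ^ 2)))
    hd.continuousOn (hd.mono fun z (hz : 0 < z.im) => hz.le) ?_ σ hσ
  intro ζ hζ
  set w : ℂ := x + ζ * (1 + b0) with hw
  have hden := den_lower ε hε w (him ζ hζ)
  have hdpos : 0 < ‖1 - ε * w * Complex.I‖ ^ 2 := by
    have := norm_pos_iff.2 (hne ζ hζ)
    positivity
  have hζw : ‖ζ‖ ^ 2 * (1 + b0) ^ 2 ≤ 2 * ‖w‖ ^ 2 + 2 * x ^ 2 := by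
    have e : ζ * (1 + b0 : ℝ) = w - x := by rw [hw]; push_cast; ring
    have e2 : ‖ζ‖ * (1 + b0) = ‖w - x‖ := by
      rw [← e, norm_mul, Complex.norm_real, Real.norm_of_nonneg hk.le]
    rw [← mul_pow, e2]
    have := norm_sub_le w x
    rw [Complex.norm_real, Real.norm_eq_abs] at this
    calc ‖w - x‖ ^ 2 ≤ (‖w‖ + |x|) ^ 2 := by gcongr
      _ ≤ 2 * ‖w‖ ^ 2 + 2 * |x| ^ 2 := by nlinarith [sq_nonneg (‖w‖ - |x|)]
      _ = _ := by rw [sq_abs]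
  have hmain : 1 + ‖ζ‖ ^ 2 ≤ (1 + 2 * x ^ 2 / (1 + b0) ^ 2 + 2 / ((1 + b0) ^ 2 * ε ^ 2)) *
      ‖1 - ε * w * Complex.I‖ ^ 2 := by
    have h3 : ‖ζ‖ ^ 2 ≤ 2 * ‖w‖ ^ 2 / (1 + b0) ^ 2 + 2 * x ^ 2 / (1 + b0) ^ 2 := by
      rw [← add_div, le_div_iff₀ (by positivity)]; exact hζw
    refine le_trans ?_ (mul_le_mul_of_nonneg_left hden (by positivity))
    have e3 : 2 / ((1 + b0) ^ 2 * ε ^ 2) * (ε ^ 2 * ‖w‖ ^ 2) = 2 * ‖w‖ ^ 2 / (1 + b0) ^ 2 := by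
      field_simp
    have p1 : 0 ≤ 2 * x ^ 2 / (1 + b0) ^ 2 := by positivity
    have p2 : 0 ≤ 2 / ((1 + b0) ^ 2 * ε ^ 2) := by positivity
    have p3 : 0 ≤ ε ^ 2 * ‖w‖ ^ 2 := by positivity
    nlinarith [mul_nonneg p1 p3]
  unfold Freg
  rw [norm_mul, norm_inv, mul_pow, inv_pow, mul_assoc]
  refine mul_le_mul (hM _ _ _ (him ζ hζ) (hcone2 ζ hζ)) ?_ (by positivity) hM0
  rw [inv_mul_le_iff₀ hdpos, mul_comm]
  exact hmain

lemma bracket_eps {F : (Fin 3 → ℂ) → ℂ} (hFm : Measurable F) (hF : DifferentiableOn ℂ F TLambda3)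
    (hH : hardyNormSq F < ⊤) (ε : ℝ) (hε : 0 < ε) (a0 a1 b0 b1 b2 : ℝ) (h0 : |b0| < 1/4)
    (h1 : |b1| < 1/4) (h2 : |b2| < 1/4) (hb1 : b1 ≠ 0) :
    ∫⁻ y in Ioi (0:ℝ), ∫⁻ x : ℝ, ∫⁻ q : ℝ, ‖Freg F ε (x + y * (Complex.I + (a0 + b0 * Complex.I)))
      (y * (a1 + b1 * Complex.I)) (q + y * b2 * Complex.I)‖ₑ ^ 2 ≤
      (‖(a1 + b1 * Complex.I : ℂ)‖ₑ)⁻¹ * hardyNormSq F := by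
  have hR := fun {α : Type} [MeasurableSpace α] {f0 f1 f2 : α → ℂ} (h0 : Measurable f0)
    (h1 : Measurable f1) (h2 : Measurable f2) => ((Freg_measurable hFm ε h0 h1 h2).enorm).pow_const 2
  set σ : ℂ := (a1 / b1 : ℝ) + Complex.I with hσ
  have hσim : 0 < σ.im := by simp [hσ]
  have hb1c : (b1:ℂ) ≠ 0 := by exact_mod_cast hb1
  have hσb : σ * b1 = a1 + b1 * Complex.I := by
    rw [hσ]; push_cast; field_simp
  -- Step 1: shifts
  have s1 : ∀ y : ℝ, ∫⁻ x : ℝ, ∫⁻ q : ℝ, ‖Freg F ε (x + y * (Complex.I + (a0 + b0 * Complex.I)))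
      (y * (a1 + b1 * Complex.I)) (q + y * b2 * Complex.I)‖ₑ ^ 2 =
      ∫⁻ x : ℝ, ∫⁻ q : ℝ, ‖Freg F ε (x + y * σ * (1 + b0)) (y * σ * b1) (q + y * σ * b2)‖ₑ ^ 2 := by
    intro y
    have t1 := lintegral_add_left_eq_self (μ := volume) (fun x : ℝ => ∫⁻ q : ℝ,
      ‖Freg F ε (x + y * (Complex.I + (a0 + b0 * Complex.I)))
      (y * (a1 + b1 * Complex.I)) (q + y * b2 * Complex.I)‖ₑ ^ 2) (y * (a1 / b1) * (1 + b0) - y * a0)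
    rw [← t1]
    refine lintegral_congr fun x => ?_
    have t2 := lintegral_add_left_eq_self (μ := volume) (fun q : ℝ =>
      ‖Freg F ε ((y * (a1 / b1) * (1 + b0) - y * a0 + x : ℝ) + y * (Complex.I + (a0 + b0 * Complex.I)))
      (y * (a1 + b1 * Complex.I)) (q + y * b2 * Complex.I)‖ₑ ^ 2) (y * (a1 / b1) * b2)
    rw [← t2]
    refine lintegral_congr fun q => ?_
    congr 3
    · rw [hσ]; push_cast; ring
    · rw [← hσb]; ring
    · rw [hσ]; push_cast; ring
  simp_rw [s1]
  -- Step 2: Tonelli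
  have s2 : ∫⁻ y in Ioi (0:ℝ), ∫⁻ x : ℝ, ∫⁻ q : ℝ,
      ‖Freg F ε (x + y * σ * (1 + b0)) (y * σ * b1) (q + y * σ * b2)‖ₑ ^ 2 =
      ∫⁻ x : ℝ, ∫⁻ q : ℝ, ∫⁻ y in Ioi (0:ℝ),
      ‖Freg F ε (x + y * σ * (1 + b0)) (y * σ * b1) (q + y * σ * b2)‖ₑ ^ 2 := by
    rw [swap_l]
    · refine lintegral_congr fun x => swap_l _ ?_
      exact hR (by fun_prop) (by fun_prop) (by fun_prop)
    · refine Measurable.lintegral_prod_right' (f := fun p : (ℝ × ℝ) × ℝ =>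
        ‖Freg F ε (p.1.2 + p.1.1 * σ * (1 + b0)) (p.1.1 * σ * b1) (p.2 + p.1.1 * σ * b2)‖ₑ ^ 2) ?_
      exact hR (by fun_prop) (by fun_prop) (by fun_prop)
  rw [s2]
  have s3 : ∫⁻ x : ℝ, ∫⁻ q : ℝ, ∫⁻ y in Ioi (0:ℝ),
      ‖Freg F ε (x + y * σ * (1 + b0)) (y * σ * b1) (q + y * σ * b2)‖ₑ ^ 2 ≤
      ENNReal.ofReal (‖σ‖⁻¹) * ∫⁻ x : ℝ, ∫⁻ q : ℝ, ∫⁻ s : ℝ,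
        ‖Freg F ε (x + s * (1 + b0)) (s * b1) (q + s * b2)‖ₑ ^ 2 := by
    rw [← lintegral_const_mul' _ _ ENNReal.ofReal_ne_top]
    refine lintegral_mono fun x => ?_
    rw [← lintegral_const_mul' _ _ ENNReal.ofReal_ne_top]
    exact lintegral_mono fun q => slice_ray hFm hF hH ε hε b0 b1 b2 h0 h1 h2 σ hσim x q
  have s4 : ∫⁻ x : ℝ, ∫⁻ q : ℝ, ∫⁻ s : ℝ,
        ‖Freg F ε (x + s * (1 + b0)) (s * b1) (q + s * b2)‖ₑ ^ 2 =
      ∫⁻ s : ℝ, ∫⁻ x : ℝ, ∫⁻ q : ℝ,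
        ‖Freg F ε (x + s * (1 + b0)) (s * b1) (q + s * b2)‖ₑ ^ 2 := by
    rw [swap_l (fun s x => ∫⁻ q : ℝ,
        ‖Freg F ε (x + s * (1 + b0)) (s * b1) (q + s * b2)‖ₑ ^ 2)]
    · refine lintegral_congr fun x => swap_l _ ?_
      exact hR (by fun_prop) (by fun_prop) (by fun_prop)
    · refine Measurable.lintegral_prod_right' (f := fun p : (ℝ × ℝ) × ℝ =>
        ‖Freg F ε (p.1.2 + p.1.1 * (1 + b0)) (p.1.1 * b1) (p.2 + p.1.1 * b2)‖ₑ ^ 2) ?_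
      exact hR (by fun_prop) (by fun_prop) (by fun_prop)
  have s5 : ∀ s : ℝ, ∫⁻ x : ℝ, ∫⁻ q : ℝ,
        ‖Freg F ε (x + s * (1 + b0)) (s * b1) (q + s * b2)‖ₑ ^ 2 =
        ∫⁻ x : ℝ, ∫⁻ q : ℝ, ‖Freg F ε x (b1 * s : ℝ) q‖ₑ ^ 2 := by
    intro s
    rw [← lintegral_add_left_eq_self (μ := volume) (fun x : ℝ => ∫⁻ q : ℝ,
      ‖Freg F ε x (b1 * s : ℝ) q‖ₑ ^ 2) (s * (1 + b0))]
    refine lintegral_congr fun x => ?_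
    rw [← lintegral_add_left_eq_self (μ := volume) (fun q : ℝ =>
      ‖Freg F ε (s * (1 + b0) + x : ℝ) (b1 * s : ℝ) q‖ₑ ^ 2) (s * b2)]
    refine lintegral_congr fun q => ?_
    congr 3
    · push_cast; ring
    · push_cast; ring
    · push_cast; ring
  have s6 : ∫⁻ s : ℝ, ∫⁻ x : ℝ, ∫⁻ q : ℝ, ‖Freg F ε x (b1 * s : ℝ) q‖ₑ ^ 2 =
      ENNReal.ofReal |b1⁻¹| * ∫⁻ s : ℝ, ∫⁻ x : ℝ, ∫⁻ q : ℝ, ‖Freg F ε x s q‖ₑ ^ 2 := by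
    refine lintegral_scale (fun s : ℝ => ∫⁻ x : ℝ, ∫⁻ q : ℝ, ‖Freg F ε x s q‖ₑ ^ 2) ?_ b1 hb1
    refine Measurable.lintegral_prod_right' (f := fun p : ℝ × ℝ => ∫⁻ q : ℝ,
        ‖Freg F ε p.2 p.1 q‖ₑ ^ 2) ?_
    refine Measurable.lintegral_prod_right' (f := fun p : (ℝ × ℝ) × ℝ =>
        ‖Freg F ε p.1.2 p.1.1 p.2‖ₑ ^ 2) ?_
    exact hR (by fun_prop) (by fun_prop) (by fun_prop)
  have s7 : ∫⁻ s : ℝ, ∫⁻ x : ℝ, ∫⁻ q : ℝ, ‖Freg F ε x s q‖ₑ ^ 2 ≤ hardyNormSq F := by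
    rw [swap_l (fun s x => ∫⁻ q : ℝ, ‖Freg F ε x s q‖ₑ ^ 2)]
    · refine le_trans ?_ (hardy_slice hFm ε 0 0 hε (by simpa using by positivity))
      refine lintegral_mono fun x => lintegral_mono fun s => lintegral_mono fun q => ?_
      have := Freg_norm_le F ε hε x s q (by simp)
      simp only [Complex.ofReal_zero, zero_mul, add_zero]
      gcongr
    · refine Measurable.lintegral_prod_right' (f := fun p : (ℝ × ℝ) × ℝ =>
        ‖Freg F ε p.1.2 p.1.1 p.2‖ₑ ^ 2) ?_
      exact hR (by fun_prop) (by fun_prop) (by fun_prop)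
  refine s3.trans ?_
  rw [s4]
  simp_rw [s5]
  rw [s6, ← mul_assoc]
  refine mul_le_mul' (le_of_eq ?_) s7
  rw [← ENNReal.ofReal_mul (by positivity), ← hσb, ← ofReal_norm, ← ENNReal.ofReal_inv_of_pos,
    norm_mul, mul_inv, abs_inv, Complex.norm_real, Real.norm_eq_abs]
  rw [norm_pos_iff]
  intro h
  rcases mul_eq_zero.1 h with h | h
  · rw [h] at hσim; simp at hσim
  · exact hb1c h

lemma bracket {F : (Fin 3 → ℂ) → ℂ} (hFm : Measurable F) (hF : DifferentiableOn ℂ F TLambda3)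
    (hH : hardyNormSq F < ⊤) (a0 a1 b0 b1 b2 : ℝ) (h0 : |b0| < 1/4)
    (h1 : |b1| < 1/4) (h2 : |b2| < 1/4) (hb1 : b1 ≠ 0) :
    ∫⁻ y in Ioi (0:ℝ), ∫⁻ x : ℝ, ∫⁻ q : ℝ, ‖F ![x + y * (Complex.I + (a0 + b0 * Complex.I)),
      y * (a1 + b1 * Complex.I), q + y * b2 * Complex.I]‖ₑ ^ 2 ≤
      (‖(a1 + b1 * Complex.I : ℂ)‖ₑ)⁻¹ * hardyNormSq F := by
  set e : ℕ → ℝ := fun n => 1 / ((n:ℝ) + 1) with he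
  have he0 : Filter.Tendsto e Filter.atTop (nhds 0) := tendsto_one_div_add_atTop_nhds_zero_nat
  have hep : ∀ n, 0 < e n := fun n => by positivity
  set f : ℕ → ℝ → ℝ → ℝ → ℝ≥0∞ := fun n y x q =>
    ‖Freg F (e n) (x + y * (Complex.I + (a0 + b0 * Complex.I)))
      (y * (a1 + b1 * Complex.I)) (q + y * b2 * Complex.I)‖ₑ ^ 2 with hf
  have hlim : ∀ y ∈ Ioi (0:ℝ), ∀ x q : ℝ, ‖F ![x + y * (Complex.I + (a0 + b0 * Complex.I)),
      y * (a1 + b1 * Complex.I), q + y * b2 * Complex.I]‖ₑ ^ 2 =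
      Filter.liminf (fun n => f n y x q) Filter.atTop := by
    intro y hy x q
    symm
    apply Filter.Tendsto.liminf_eq
    have hT : ![x + y * (Complex.I + (a0 + b0 * Complex.I)),
      y * (a1 + b1 * Complex.I), q + y * b2 * Complex.I] ∈ TLambda3 := by
      rw [abs_lt] at h0 h1 h2
      have hy' : 0 < y := hy
      rw [mem_TLambda3_iff]
      simp
      refine ⟨by nlinarith, ?_⟩
      have : y + y * b0 = y * (1 + b0) := by ring
      simp only [mul_pow, this, ← mul_add]
      exact mul_lt_mul_of_pos_left (by nlinarith) (by positivity)
    have hcF := (hF.differentiableAt (isOpen_TLambda3.mem_nhds hT)).continuousAt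
    simp only [hf, Freg]
    refine ((ENNReal.continuous_pow 2).tendsto _).comp ((continuous_enorm.tendsto _).comp ?_)
    have t1 : Filter.Tendsto (fun n => F ![x + y * (Complex.I + (a0 + b0 * Complex.I)) + e n * Complex.I,
      y * (a1 + b1 * Complex.I), q + y * b2 * Complex.I]) Filter.atTop
      (nhds (F ![x + y * (Complex.I + (a0 + b0 * Complex.I)),
      y * (a1 + b1 * Complex.I), q + y * b2 * Complex.I])) := by
      refine hcF.tendsto.comp ?_
      have hc : Continuous (fun ε : ℝ => ![x + y * (Complex.I + (a0 + b0 * Complex.I)) + ε * Complex.I,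
        y * (a1 + b1 * Complex.I), q + y * b2 * Complex.I]) :=
        continuous_vec3 (by fun_prop) (by fun_prop) (by fun_prop)
      have := (hc.tendsto 0).comp he0
      simpa [Function.comp_def] using this
    have t2 : Filter.Tendsto (fun n => (1 - e n * (x + y * (Complex.I + (a0 + b0 * Complex.I))) * Complex.I)⁻¹)
        Filter.atTop (nhds 1) := by
      have hc : Continuous (fun ε : ℝ => (1 - ε * (x + y * (Complex.I + (a0 + b0 * Complex.I))) * Complex.I)) := by
        fun_prop
      have := ((hc.tendsto 0).comp he0).inv₀ (by simp)
      simpa using this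
    simpa using t1.mul t2
  have hfm : ∀ n, Measurable (fun p : (ℝ × ℝ) × ℝ => f n p.1.1 p.1.2 p.2) := fun n =>
    (Freg_measurable hFm (e n) (by fun_prop) (by fun_prop) (by fun_prop)).enorm.pow_const 2
  have hfm2 : ∀ n, Measurable (fun p : ℝ × ℝ => ∫⁻ q, f n p.1 p.2 q) := fun n =>
    (hfm n).lintegral_prod_right'
  have hfm3 : ∀ n, Measurable (fun y : ℝ => ∫⁻ x, ∫⁻ q, f n y x q) := fun n =>
    (hfm2 n).lintegral_prod_right'
  calc _ = ∫⁻ y in Ioi (0:ℝ), ∫⁻ x : ℝ, ∫⁻ q : ℝ, Filter.liminf (fun n => f n y x q) Filter.atTop :=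
        setLIntegral_congr_fun measurableSet_Ioi fun y hy =>
          lintegral_congr fun x => lintegral_congr fun q => hlim y hy x q
    _ ≤ ∫⁻ y in Ioi (0:ℝ), ∫⁻ x : ℝ, Filter.liminf (fun n => ∫⁻ q : ℝ, f n y x q) Filter.atTop :=
        lintegral_mono fun y => lintegral_mono fun x => lintegral_liminf_le fun n =>
          (hfm n).comp (f := fun q : ℝ => ((y, x), q)) (by fun_prop)
    _ ≤ ∫⁻ y in Ioi (0:ℝ), Filter.liminf (fun n => ∫⁻ x : ℝ, ∫⁻ q : ℝ, f n y x q) Filter.atTop :=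
        lintegral_mono fun y => lintegral_liminf_le fun n =>
          (hfm2 n).comp (f := fun x : ℝ => (y, x)) (by fun_prop)
    _ ≤ Filter.liminf (fun n => ∫⁻ y in Ioi (0:ℝ), ∫⁻ x : ℝ, ∫⁻ q : ℝ, f n y x q) Filter.atTop :=
        lintegral_liminf_le hfm3
    _ ≤ Filter.liminf (fun _ : ℕ => (‖(a1 + b1 * Complex.I : ℂ)‖ₑ)⁻¹ * hardyNormSq F) Filter.atTop :=
        Filter.liminf_le_liminf (Filter.Eventually.of_forall fun n =>
          bracket_eps hFm hF hH (e n) (hep n) a0 a1 b0 b1 b2 h0 h1 h2 hb1)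
    _ = _ := Filter.liminf_const _


lemma isOpen_UHP : IsOpen UHP := isOpen_lt continuous_const Complex.continuous_im

lemma berg_eq (m : ℕ) (G : ℂ → ℂ) :
    bergNormSqUHP (4 * m + 1) G =
      ∫⁻ z in UHP, ENNReal.ofReal (z.im ^ (4 * m + 1)) * ‖G z‖ₑ ^ 2 := by
  unfold bergNormSqUHP Vm
  rw [lintegral_withDensity_eq_lintegral_mul_non_measurable]
  · refine lintegral_congr fun z => ?_
    have : (4 * (m:ℝ) + 1) = ((4 * m + 1 : ℕ) : ℝ) := by push_cast; ring
    simp only [Pi.mul_apply]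
    rw [this, Real.rpow_natCast]; rfl
  · have : (4 * (m:ℝ) + 1) = ((4 * m + 1 : ℕ) : ℝ) := by push_cast; ring
    simp only [this, Real.rpow_natCast]
    fun_prop
  · exact Filter.Eventually.of_forall fun z => ENNReal.ofReal_lt_top

lemma lintegral_UHP (h : ℂ → ℝ≥0∞) (hm : Measurable (UHP.indicator h)) :
    ∫⁻ z in UHP, h z = ∫⁻ y in Ioi (0:ℝ), ∫⁻ x : ℝ, h (x + y * Complex.I) := by
  rw [← lintegral_indicator isOpen_UHP.measurableSet, lintegral_complex _ hm,
    ← lintegral_indicator measurableSet_Ioi]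
  refine lintegral_congr fun b => ?_
  by_cases hb : b ∈ Ioi (0:ℝ)
  · rw [indicator_of_mem hb]
    refine lintegral_congr fun a => ?_
    rw [indicator_of_mem]
    simpa [UHP] using hb
  · rw [indicator_of_notMem hb]
    rw [← lintegral_zero]
    refine lintegral_congr fun a => ?_
    rw [indicator_of_notMem]
    simpa [UHP] using hb

lemma swap5 {α β γ δ η : Type*} [MeasurableSpace α] [MeasurableSpace β] [MeasurableSpace γ]
    [MeasurableSpace δ] [MeasurableSpace η] (μ1 : Measure α) (μ2 : Measure β) (μ3 : Measure γ)
    (μ4 : Measure δ) (μ5 : Measure η) [SFinite μ1] [SFinite μ2] [SFinite μ3] [SFinite μ4]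
    [SFinite μ5] (h : α → β → γ → δ → η → ℝ≥0∞)
    (hh : Measurable (fun p : (α × β) × (γ × δ × η) => h p.1.1 p.1.2 p.2.1 p.2.2.1 p.2.2.2)) :
    ∫⁻ y, ∫⁻ x, ∫⁻ c, ∫⁻ d, ∫⁻ e, h y x c d e ∂μ5 ∂μ4 ∂μ3 ∂μ2 ∂μ1 =
    ∫⁻ c, ∫⁻ d, ∫⁻ e, ∫⁻ y, ∫⁻ x, h y x c d e ∂μ2 ∂μ1 ∂μ5 ∂μ4 ∂μ3 := by
  have e1 : ∀ y x, ∫⁻ c, ∫⁻ d, ∫⁻ e, h y x c d e ∂μ5 ∂μ4 ∂μ3 =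
      ∫⁻ t, h y x t.1 t.2.1 t.2.2 ∂(μ3.prod (μ4.prod μ5)) := by
    intro y x
    have hm : Measurable fun t : γ × δ × η => h y x t.1 t.2.1 t.2.2 :=
      hh.comp (f := fun t => ((y, x), t)) (by fun_prop)
    rw [lintegral_prod _ hm.aemeasurable]
    refine lintegral_congr fun c => ?_
    have hm2 : Measurable fun t : δ × η => h y x c t.1 t.2 :=
      hm.comp (f := fun t => (c, t)) (by fun_prop)
    rw [lintegral_prod _ hm2.aemeasurable]
  have hm3 : Measurable fun t : γ × δ × η => ∫⁻ p, h p.1 p.2 t.1 t.2.1 t.2.2 ∂(μ1.prod μ2) :=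
    hh.lintegral_prod_left'
  have e2 : ∀ c d e, ∫⁻ y, ∫⁻ x, h y x c d e ∂μ2 ∂μ1 = ∫⁻ p, h p.1 p.2 c d e ∂(μ1.prod μ2) := by
    intro c d e
    have hm : Measurable fun p : α × β => h p.1 p.2 c d e :=
      hh.comp (f := fun p => (p, (c, d, e))) (by fun_prop)
    rw [lintegral_prod _ hm.aemeasurable]
  simp_rw [e1, e2]
  have hm4 : Measurable fun p : α × β => ∫⁻ t, h p.1 p.2 t.1 t.2.1 t.2.2 ∂(μ3.prod (μ4.prod μ5)) :=
    hh.lintegral_prod_right'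
  rw [← lintegral_prod (fun p : α × β => ∫⁻ t, h p.1 p.2 t.1 t.2.1 t.2.2 ∂(μ3.prod (μ4.prod μ5)))
    hm4.aemeasurable, lintegral_lintegral_swap hh.aemeasurable, lintegral_prod _ hm3.aemeasurable]
  refine lintegral_congr fun c => ?_
  have hm5 : Measurable fun t : δ × η => ∫⁻ p, h p.1 p.2 c t.1 t.2 ∂(μ1.prod μ2) :=
    hm3.comp (f := fun t => (c, t)) (by fun_prop)
  rw [lintegral_prod _ hm5.aemeasurable]

lemma ae_im_ne : ∀ᵐ z : ℂ, z.im ≠ 0 := by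
  rw [ae_iff]
  have : {z : ℂ | ¬ z.im ≠ 0} = (LinearMap.ker Complex.imLm : Set ℂ) := by
    ext z; simp
  rw [this]
  apply Measure.addHaar_submodule
  intro h
  have : Complex.I ∈ LinearMap.ker Complex.imLm := by rw [h]; trivial
  simp at this

lemma vec_mem_T {z : ℂ} (hz : z ∈ UHP) : ![z, 0, 0] ∈ TLambda3 := by
  rw [mem_TLambda3_iff]
  have hz : 0 < z.im := hz
  simp [hz]

lemma G_diff {F : (Fin 3 → ℂ) → ℂ} (hF : DifferentiableOn ℂ F TLambda3) (m : ℕ) :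
    DifferentiableOn ℂ (fun z => Box^[m] F ![z, 0, 0]) UHP :=
  (Box_iter_differentiableOn isOpen_TLambda3 hF m).comp
    (differentiable_vec3 (by fun_prop) (by fun_prop) (by fun_prop)).differentiableOn
    fun _ hz => vec_mem_T hz

lemma berg_bound_meas (m : ℕ) : ∃ K : ℝ≥0∞, K < ⊤ ∧ ∀ {F : (Fin 3 → ℂ) → ℂ} (_ : Measurable F)
    (_ : DifferentiableOn ℂ F TLambda3) (_ : hardyNormSq F < ⊤),
    bergNormSqUHP (4 * m + 1) (fun z => Box^[m] F ![z, 0, 0]) ≤ K * hardyNormSq F := by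
  set c := ENNReal.ofReal (((768 * ((m:ℝ) + 1) ^ 2) ^ m) ^ 2 * (64 / Real.pi) ^ 3) with hc
  set B := Metric.ball (0:ℂ) (1/4) with hB
  set I := Ioo (-(1/4):ℝ) (1/4) with hI
  have hBm : MeasurableSet B := Metric.isOpen_ball.measurableSet
  refine ⟨c * (volume B * ((∫⁻ ζ in B, (‖ζ‖ₑ)⁻¹) * volume I)), ?_, ?_⟩
  · refine ENNReal.mul_lt_top ENNReal.ofReal_lt_top (ENNReal.mul_lt_top measure_ball_lt_top
      (ENNReal.mul_lt_top (lintegral_inv_norm _) ?_))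
    rw [hI, Real.volume_Ioo]; exact ENNReal.ofReal_lt_top
  intro F hFm hF hH
  have hGd := G_diff hF m
  rw [berg_eq, lintegral_UHP]
  swap
  · have : UHP.indicator (fun z => ENNReal.ofReal (z.im ^ (4 * m + 1)) *
        ‖Box^[m] F ![z, 0, 0]‖ₑ ^ 2) = fun z => ENNReal.ofReal (z.im ^ (4 * m + 1)) *
        ‖UHP.indicator (fun z => Box^[m] F ![z, 0, 0]) z‖ₑ ^ 2 := by
      ext z
      by_cases hz : z ∈ UHP
      · simp [indicator_of_mem hz]
      · simp [indicator_of_notMem hz]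
    rw [this]
    have := measurable_indicator_of_continuousOn isOpen_UHP hGd.continuousOn
    fun_prop
  set Φ : ℝ → ℝ → ℂ → ℂ → ℝ → ℝ → ℝ≥0∞ := fun y x ζ0 ζ1 b2 q =>
    ‖F ![x + y * (Complex.I + ζ0), y * ζ1, q + y * b2 * Complex.I]‖ₑ ^ 2 with hΦ
  have hΦm : Measurable (fun p : ((ℝ × ℝ) × (ℂ × ℂ × ℝ)) × ℝ =>
      Φ p.1.1.1 p.1.1.2 p.1.2.1 p.1.2.2.1 p.1.2.2.2 p.2) := by
    simp only [hΦ]; fun_prop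
  have step1 : ∀ y ∈ Ioi (0:ℝ), ∀ x : ℝ, ENNReal.ofReal ((x + y * Complex.I : ℂ).im ^ (4 * m + 1)) *
      ‖Box^[m] F ![x + y * Complex.I, 0, 0]‖ₑ ^ 2 ≤
      c * ∫⁻ ζ0 in B, ∫⁻ ζ1 in B, ∫⁻ b2 in I, ∫⁻ q : ℝ, Φ y x ζ0 ζ1 b2 q := by
    intro y hy x
    have hy' : 0 < y := hy
    have him : (x + y * Complex.I : ℂ).im = y := by simp
    have hb := box_pointwise hF m x y hy
    have hin : ∀ ζ0 ζ1 : ℂ, ENNReal.ofReal y * ∫⁻ ζ2 in B,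
        ‖F ![x + y * (Complex.I + ζ0), y * ζ1, y * ζ2]‖ₑ ^ 2 ≤
        ∫⁻ b2 in I, ∫⁻ q : ℝ, Φ y x ζ0 ζ1 b2 q := by
      intro ζ0 ζ1
      refine (mul_le_mul_right (ball_le_strip (fun ζ2 =>
        ‖F ![x + y * (Complex.I + ζ0), y * ζ1, y * ζ2]‖ₑ ^ 2) (by fun_prop) _) _).trans ?_
      rw [← lintegral_const_mul' _ _ ENNReal.ofReal_ne_top]
      refine lintegral_mono fun b2 => ?_
      have := lintegral_scale (Φ y x ζ0 ζ1 b2) (by simp only [hΦ]; fun_prop) y hy'.ne'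
      have e : ∀ a2 : ℝ, Φ y x ζ0 ζ1 b2 (y * a2) =
          ‖F ![x + y * (Complex.I + ζ0), y * ζ1, y * (a2 + b2 * Complex.I)]‖ₑ ^ 2 := by
        intro a2
        simp only [hΦ]
        congr 6
        push_cast; ring
      simp_rw [e] at this
      rw [this, ← mul_assoc, ← ENNReal.ofReal_mul hy'.le, abs_inv, abs_of_pos hy',
        mul_inv_cancel₀ hy'.ne', ENNReal.ofReal_one, one_mul]
    rw [him, pow_succ, mul_comm (y ^ (4 * m)), ENNReal.ofReal_mul hy'.le, mul_assoc,
      mul_comm (ENNReal.ofReal (y ^ (4 * m)))]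
    refine (mul_le_mul_right hb _).trans ?_
    rw [← mul_assoc, mul_comm (ENNReal.ofReal y), mul_assoc]
    refine mul_le_mul_right ?_ _
    rw [← lintegral_const_mul' _ _ ENNReal.ofReal_ne_top]
    refine lintegral_mono fun ζ0 => ?_
    rw [← lintegral_const_mul' _ _ ENNReal.ofReal_ne_top]
    exact lintegral_mono fun ζ1 => hin ζ0 ζ1
  have hcT : c ≠ ⊤ := ENNReal.ofReal_ne_top
  calc _ ≤ ∫⁻ y in Ioi (0:ℝ), ∫⁻ x : ℝ,
        c * ∫⁻ ζ0 in B, ∫⁻ ζ1 in B, ∫⁻ b2 in I, ∫⁻ q : ℝ, Φ y x ζ0 ζ1 b2 q :=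
        setLIntegral_mono' measurableSet_Ioi fun y hy => lintegral_mono fun x => step1 y hy x
    _ = c * ∫⁻ y in Ioi (0:ℝ), ∫⁻ x : ℝ,
         ∫⁻ ζ0 in B, ∫⁻ ζ1 in B, ∫⁻ b2 in I, ∫⁻ q : ℝ, Φ y x ζ0 ζ1 b2 q := by
        simp_rw [lintegral_const_mul' _ _ hcT]
    _ = c * ∫⁻ ζ0 in B, ∫⁻ ζ1 in B, ∫⁻ b2 in I, ∫⁻ y in Ioi (0:ℝ), ∫⁻ x : ℝ,
          ∫⁻ q : ℝ, Φ y x ζ0 ζ1 b2 q := by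
        rw [swap5]
        exact hΦm.lintegral_prod_right'
    _ ≤ c * ∫⁻ ζ0 in B, ∫⁻ ζ1 in B, ∫⁻ b2 in I, (‖ζ1‖ₑ)⁻¹ * hardyNormSq F := by
        refine mul_le_mul_right ?_ _
        refine setLIntegral_mono' hBm fun ζ0 h0 => ?_
        refine lintegral_mono_ae ?_
        filter_upwards [ae_restrict_mem hBm, ae_restrict_of_ae ae_im_ne] with ζ1 h1 hne
        refine setLIntegral_mono' measurableSet_Ioo fun b2 h2 => ?_
        rw [hB, mem_ball_zero_iff] at h0 h1
        have := bracket hFm hF hH ζ0.re ζ1.re ζ0.im ζ1.im b2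
          ((Complex.abs_im_le_norm _).trans_lt h0) ((Complex.abs_im_le_norm _).trans_lt h1)
          (abs_lt.2 h2) hne
        simpa only [Complex.re_add_im] using this
    _ = _ := by
        simp only [lintegral_const, Measure.restrict_apply MeasurableSet.univ, univ_inter]
        have : ∀ ζ1 : ℂ, ‖ζ1‖ₑ⁻¹ * hardyNormSq F * volume I = ‖ζ1‖ₑ⁻¹ * (hardyNormSq F * volume I) :=
          fun _ => mul_assoc _ _ _
        simp_rw [this]
        rw [lintegral_mul_const _ (by fun_prop)]
        ring

lemma berg_bound (m : ℕ) : ∃ K : ℝ≥0∞, K < ⊤ ∧ ∀ {F : (Fin 3 → ℂ) → ℂ}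
    (_ : DifferentiableOn ℂ F TLambda3) (_ : hardyNormSq F < ⊤),
    bergNormSqUHP (4 * m + 1) (fun z => Box^[m] F ![z, 0, 0]) ≤ K * hardyNormSq F := by
  obtain ⟨K, hK, h⟩ := berg_bound_meas m
  refine ⟨K, hK, fun {F} hF hH => ?_⟩
  have hm := measurable_indicator_of_continuousOn isOpen_TLambda3 hF.continuousOn
  have heq : EqOn (TLambda3.indicator F) F TLambda3 := fun z hz => indicator_of_mem hz _
  have hh : hardyNormSq (TLambda3.indicator F) = hardyNormSq F := by
    unfold hardyNormSq
    refine iSup_congr fun y => iSup_congr fun hy => lintegral_congr fun x => ?_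
    rw [heq]
    change (fun i => ((x i : ℂ) + (y i : ℂ) * Complex.I).im) ∈ Lambda3
    simpa using hy
  have := h hm (hF.congr heq) (by rwa [hh])
  rw [hh, berg_eq] at this
  rw [berg_eq]
  refine le_trans (le_of_eq ?_) this
  refine setLIntegral_congr_fun isOpen_UHP.measurableSet fun z hz => ?_
  rw [Box_iter_congr isOpen_TLambda3 heq m (vec_mem_T hz)]


/-- the kernel in one variable -/
def uk (v x0 : ℝ) (l : ℂ) : ℂ := (v - Complex.I * (l - x0))⁻¹

lemma uk_den_ne {v x0 : ℝ} (hv : 0 < v) {l : ℂ} (hl : 0 ≤ l.im) :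
    (v - Complex.I * (l - x0) : ℂ) ≠ 0 := by
  intro h
  have := congrArg Complex.re h
  simp at this
  linarith

lemma uk_pow_deriv {v x0 : ℝ} (hv : 0 < v) {l : ℂ} (hl : 0 ≤ l.im) (k : ℂ) (n : ℕ) :
    HasDerivAt (fun t : ℂ => uk v x0 (l + t * k) ^ n) (Complex.I * k * n * uk v x0 l ^ (n + 1)) 0 := by
  have h0 := uk_den_ne (x0 := x0) hv hl
  have hd : HasDerivAt (fun t : ℂ => (v - Complex.I * (l + t * k - x0) : ℂ)) (- (Complex.I * k)) 0 := by
    have := ((((hasDerivAt_id (0:ℂ)).mul_const k).const_add l).sub_const (x0:ℂ)).const_mul Complex.I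
    have := this.const_sub (v:ℂ)
    simpa using this
  have hi := hd.inv (by simpa using h0)
  have hp := hi.pow n
  unfold uk
  refine hp.congr_deriv ?_
  rcases n with _ | n
  · simp
  · simp
    field_simp
    ring

/-- product test functions -/
def Pk (v x0 : ℝ) (a b d : ℕ) (z : Fin 3 → ℂ) : ℂ :=
  uk v x0 (z 0 + z 1) ^ a * uk v x0 (z 0 - z 1) ^ b * uk v x0 (z 0 + z 2) ^ d

lemma T_im {z : Fin 3 → ℂ} (hz : z ∈ TLambda3) :
    0 ≤ (z 0 + z 1).im ∧ 0 ≤ (z 0 - z 1).im ∧ 0 ≤ (z 0 + z 2).im := by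
  rw [mem_TLambda3_iff] at hz
  obtain ⟨h0, h1⟩ := hz
  simp only [Complex.add_im, Complex.sub_im]
  refine ⟨?_, ?_, ?_⟩ <;> by_contra h <;> push Not at h <;> nlinarith [sq_nonneg (z 1).im, sq_nonneg (z 2).im]

lemma Pk_diff {v : ℝ} (hv : 0 < v) (x0 : ℝ) (a b d : ℕ) :
    DifferentiableOn ℂ (Pk v x0 a b d) TLambda3 := by
  unfold Pk uk
  refine DifferentiableOn.mul (DifferentiableOn.mul ?_ ?_) ?_
  · exact (DifferentiableOn.inv (by fun_prop) fun z hz => uk_den_ne hv (T_im hz).1).pow a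
  · exact (DifferentiableOn.inv (by fun_prop) fun z hz => uk_den_ne hv (T_im hz).2.1).pow b
  · exact (DifferentiableOn.inv (by fun_prop) fun z hz => uk_den_ne hv (T_im hz).2.2).pow d

lemma Pk_pd {v : ℝ} (hv : 0 < v) (x0 : ℝ) (a b d : ℕ) (i : Fin 3) (k1 k2 k3 : ℂ)
    (e1 : (Pi.single i 1 : Fin 3 → ℂ) 0 + (Pi.single i 1 : Fin 3 → ℂ) 1 = k1)
    (e2 : (Pi.single i 1 : Fin 3 → ℂ) 0 - (Pi.single i 1 : Fin 3 → ℂ) 1 = k2)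
    (e3 : (Pi.single i 1 : Fin 3 → ℂ) 0 + (Pi.single i 1 : Fin 3 → ℂ) 2 = k3) :
    EqOn (pd i (Pk v x0 a b d)) (fun z => Complex.I * k1 * a * Pk v x0 (a+1) b d z +
      Complex.I * k2 * b * Pk v x0 a (b+1) d z + Complex.I * k3 * d * Pk v x0 a b (d+1) z) TLambda3 := by
  intro z hz
  have h := slice_deriv (v := Pi.single i 1) ((Pk_diff hv x0 a b d).differentiableAt (isOpen_TLambda3.mem_nhds hz))
  have h1 := ((uk_pow_deriv (x0 := x0) hv (T_im hz).1 k1 a).mul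
    (uk_pow_deriv (x0 := x0) hv (T_im hz).2.1 k2 b)).mul
    (uk_pow_deriv (x0 := x0) hv (T_im hz).2.2 k3 d)
  have h2 := h1.congr_of_eventuallyEq (f₁ := fun t : ℂ => Pk v x0 a b d (z + t • Pi.single i 1))
    (Filter.Eventually.of_forall fun t => by
    simp only [Pk, Pi.add_apply, Pi.smul_apply, smul_eq_mul, Pi.mul_apply]
    rw [← e1, ← e2, ← e3]
    have q : ∀ s : ℂ → ℂ, ∀ x y : ℂ, x = y → s x = s y := fun s x y h => congrArg s h
    refine congrArg₂ (· * ·) (congrArg₂ (· * ·) (q (fun l => uk v x0 l ^ a) _ _ ?_)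
      (q (fun l => uk v x0 l ^ b) _ _ ?_)) (q (fun l => uk v x0 l ^ d) _ _ ?_) <;> ring)
  have h3 := h.unique h2
  unfold pd
  rw [h3]
  simp [Pk]
  ring

lemma pd_lin3 {f g h : (Fin 3 → ℂ) → ℂ} (hf : DifferentiableOn ℂ f TLambda3)
    (hg : DifferentiableOn ℂ g TLambda3) (hh : DifferentiableOn ℂ h TLambda3) (a b c : ℂ) (i : Fin 3) :
    EqOn (pd i (fun z => a * f z + b * g z + c * h z))
      (fun z => a * pd i f z + b * pd i g z + c * pd i h z) TLambda3 := by
  intro z hz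
  have hn := isOpen_TLambda3.mem_nhds hz
  have h1 := (hf.differentiableAt hn).hasFDerivAt.const_mul a
  have h2 := (hg.differentiableAt hn).hasFDerivAt.const_mul b
  have h3 := (hh.differentiableAt hn).hasFDerivAt.const_mul c
  have h4 := ((h1.add h2).add h3).fderiv
  unfold pd
  change (fderiv ℂ (fun z => a * f z + b * g z + c * h z) z) _ = _
  have : (fun z => a * f z + b * g z + c * h z) =
    (((fun y => a * f y) + fun y => b * g y) + fun y => c * h y) := rfl
  rw [this, h4]
  simp

lemma Pk_pd2 {v : ℝ} (hv : 0 < v) (x0 : ℝ) (a b d : ℕ) (i : Fin 3) (k1 k2 k3 : ℂ)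
    (e1 : (Pi.single i 1 : Fin 3 → ℂ) 0 + (Pi.single i 1 : Fin 3 → ℂ) 1 = k1)
    (e2 : (Pi.single i 1 : Fin 3 → ℂ) 0 - (Pi.single i 1 : Fin 3 → ℂ) 1 = k2)
    (e3 : (Pi.single i 1 : Fin 3 → ℂ) 0 + (Pi.single i 1 : Fin 3 → ℂ) 2 = k3) :
    EqOn (pd i (pd i (Pk v x0 a b d))) (fun z => -(k1 ^ 2 * a * (a + 1) * Pk v x0 (a+2) b d z +
      k2 ^ 2 * b * (b + 1) * Pk v x0 a (b+2) d z + k3 ^ 2 * d * (d + 1) * Pk v x0 a b (d+2) z +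
      2 * k1 * k2 * a * b * Pk v x0 (a+1) (b+1) d z + 2 * k1 * k3 * a * d * Pk v x0 (a+1) b (d+1) z +
      2 * k2 * k3 * b * d * Pk v x0 a (b+1) (d+1) z)) TLambda3 := by
  intro z hz
  have I2 : Complex.I ^ 2 = -1 := Complex.I_sq
  rw [pd_congr isOpen_TLambda3 (Pk_pd hv x0 a b d i k1 k2 k3 e1 e2 e3) i hz]
  rw [pd_lin3 (Pk_diff hv x0 _ _ _) (Pk_diff hv x0 _ _ _) (Pk_diff hv x0 _ _ _) _ _ _ i hz]
  have p := fun a b d => Pk_pd hv x0 a b d i k1 k2 k3 e1 e2 e3 hz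
  simp only [p]
  push_cast
  ring_nf
  rw [I2]
  ring

lemma Pk_Box {v : ℝ} (hv : 0 < v) (x0 : ℝ) (a b d : ℕ) :
    EqOn (Box (Pk v x0 a b d)) (fun z => 4 * a * b * Pk v x0 (a+1) (b+1) d z +
      2 * a * d * Pk v x0 (a+1) b (d+1) z + 2 * b * d * Pk v x0 a (b+1) (d+1) z) TLambda3 := by
  intro z hz
  unfold Box
  rw [Pk_pd2 hv x0 a b d 0 1 1 1 (by simp) (by simp) (by simp) hz,
    Pk_pd2 hv x0 a b d 1 1 (-1) 0 (by simp) (by simp) (by simp) hz,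
    Pk_pd2 hv x0 a b d 2 0 0 1 (by simp) (by simp) (by simp) hz]
  ring

lemma Box_lin3 {f g h : (Fin 3 → ℂ) → ℂ} (hf : DifferentiableOn ℂ f TLambda3)
    (hg : DifferentiableOn ℂ g TLambda3) (hh : DifferentiableOn ℂ h TLambda3) (a b c : ℂ) :
    EqOn (Box (fun z => a * f z + b * g z + c * h z))
      (fun z => a * Box f z + b * Box g z + c * Box h z) TLambda3 := by
  intro z hz
  have p : ∀ i, pd i (pd i (fun z => a * f z + b * g z + c * h z)) z =
      a * pd i (pd i f) z + b * pd i (pd i g) z + c * pd i (pd i h) z := by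
    intro i
    rw [pd_congr isOpen_TLambda3 (pd_lin3 hf hg hh a b c i) i hz]
    have D := fun {f} hf => pd_differentiableOn (F := f) isOpen_TLambda3 hf i
    exact pd_lin3 (D hf) (D hg) (D hh) a b c i hz
  unfold Box
  rw [p, p, p]; ring

inductive Good : ℕ → (ℝ → ℝ → (Fin 3 → ℂ) → ℂ) → Prop
  | mono (c : ℝ) (hc : 0 < c) (a b d : ℕ) :
      Good (a + b + d + 3) (fun v x0 z => c * Pk v x0 (a+1) (b+1) (d+1) z)
  | add (N : ℕ) (f g : ℝ → ℝ → (Fin 3 → ℂ) → ℂ) (hf : Good N f) (hg : Good N g) :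
      Good N (fun v x0 z => f v x0 z + g v x0 z)

lemma Good.diff {N : ℕ} {f : ℝ → ℝ → (Fin 3 → ℂ) → ℂ} (h : Good N f) (v : ℝ) (hv : 0 < v) (x0 : ℝ) :
    DifferentiableOn ℂ (f v x0) TLambda3 := by
  induction h with
  | mono c hc a b d => exact (Pk_diff hv x0 _ _ _).const_mul _
  | add N f g hf hg ihf ihg => exact ihf.add ihg

lemma Good.val {N : ℕ} {f : ℝ → ℝ → (Fin 3 → ℂ) → ℂ} (h : Good N f) :
    ∃ c : ℝ, 0 < c ∧ ∀ v x0 z, f v x0 ![z, 0, 0] = c * uk v x0 z ^ N := by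
  induction h with
  | mono c hc a b d =>
    refine ⟨c, hc, fun v x0 z => ?_⟩
    simp [Pk]
    left; ring
  | add N f g hf hg ihf ihg =>
    obtain ⟨c, hc, h1⟩ := ihf
    obtain ⟨c', hc', h2⟩ := ihg
    refine ⟨c + c', by positivity, fun v x0 z => ?_⟩
    show f v x0 ![z, 0, 0] + g v x0 ![z, 0, 0] = _
    rw [h1, h2]; push_cast; ring

lemma Good.box {N : ℕ} {f : ℝ → ℝ → (Fin 3 → ℂ) → ℂ} (h : Good N f) :
    ∃ g, Good (N + 2) g ∧ ∀ v, 0 < v → ∀ x0, EqOn (Box (f v x0)) (g v x0) TLambda3 := by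
  induction h with
  | mono c hc a b d =>
    have g0 := Good.mono (c * (4 * (a + 1) * (b + 1))) (by positivity) (a+1) (b+1) (d)
    rw [show a+1 + (b+1) + (d) + 3 = a + b + d + 3 + 2 by omega] at g0
    have g1 := Good.mono (c * (2 * (a + 1) * (d + 1))) (by positivity) (a+1) (b) (d+1)
    rw [show a+1 + (b) + (d+1) + 3 = a + b + d + 3 + 2 by omega] at g1
    have g2 := Good.mono (c * (2 * (b + 1) * (d + 1))) (by positivity) (a) (b+1) (d+1)
    rw [show a + (b+1) + (d+1) + 3 = a + b + d + 3 + 2 by omega] at g2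
    refine ⟨_, Good.add _ _ _ (Good.add _ _ _ g0 g1) g2, ?_⟩
    intro v hv x0 z hz
    have D := Pk_diff hv x0 (a+1) (b+1) (d+1)
    have := Box_lin3 D D D c 0 0 hz
    simp only [zero_mul, add_zero] at this
    rw [this, Pk_Box hv x0 _ _ _ hz]
    push_cast
    ring
  | add N f g hf hg ihf ihg =>
    obtain ⟨f', hf', h1⟩ := ihf
    obtain ⟨g', hg', h2⟩ := ihg
    refine ⟨_, Good.add _ _ _ hf' hg', fun v hv x0 z hz => ?_⟩
    have := Box_lin3 (hf.diff v hv x0) (hg.diff v hv x0) (hg.diff v hv x0) 1 1 0 hz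
    simp only [one_mul, zero_mul, add_zero] at this
    rw [this, h1 v hv x0 hz, h2 v hv x0 hz]

lemma Good.box_iter {N : ℕ} {f : ℝ → ℝ → (Fin 3 → ℂ) → ℂ} (h : Good N f) (m : ℕ) :
    ∃ g, Good (N + 2 * m) g ∧ ∀ v, 0 < v → ∀ x0, EqOn (Box^[m] (f v x0)) (g v x0) TLambda3 := by
  induction m with
  | zero => exact ⟨f, h, fun v hv x0 z hz => rfl⟩
  | succ m ih =>
    obtain ⟨g, hg, h1⟩ := ih
    obtain ⟨g', hg', h2⟩ := hg.box
    refine ⟨g', hg', fun v hv x0 z hz => ?_⟩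
    rw [Function.iterate_succ_apply', Box_congr isOpen_TLambda3 (h1 v hv x0) hz, h2 v hv x0 hz]

lemma Pk_Box_iter (m : ℕ) : ∃ c : ℝ, 0 < c ∧ ∀ v, 0 < v → ∀ x0 : ℝ, ∀ z ∈ UHP,
    Box^[m] (Pk v x0 1 1 1) ![z, 0, 0] = c * uk v x0 z ^ (3 + 2 * m) := by
  obtain ⟨g, hg, h1⟩ := (Good.mono 1 one_pos 0 0 0).box_iter m
  obtain ⟨c, hc, h2⟩ := hg.val
  refine ⟨c, hc, fun v hv x0 z hz => ?_⟩
  have := h1 v hv x0 (vec_mem_T hz)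
  simp only [Complex.ofReal_one, one_mul, zero_add] at this
  rw [this, h2]

lemma uk_norm_sq {v x0 : ℝ} (hv : 0 < v) {l : ℂ} (hl : 0 ≤ l.im) :
    ‖uk v x0 l‖ ^ 2 ≤ (v ^ 2 + (l.re - x0) ^ 2)⁻¹ := by
  unfold uk
  rw [norm_inv, inv_pow, ← Complex.normSq_eq_norm_sq, Complex.normSq_apply]
  apply inv_anti₀ (by positivity)
  simp
  nlinarith [mul_nonneg hv.le hl]

/-- Poisson-like kernel -/
def kk (v t : ℝ) : ℝ≥0∞ := ENNReal.ofReal ((v ^ 2 + t ^ 2)⁻¹)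

@[fun_prop]
lemma kk_meas {α : Type*} [MeasurableSpace α] (v : ℝ) {f : α → ℝ} (hf : Measurable f) :
    Measurable (fun a => kk v (f a)) := by unfold kk; fun_prop

lemma kk_int (v : ℝ) (hv : 0 < v) : ∫⁻ t, kk v t = ENNReal.ofReal (Real.pi / v) := by
  have h1 : ∫⁻ t : ℝ, ENNReal.ofReal ((1 + t ^ 2)⁻¹) = ENNReal.ofReal Real.pi := by
    rw [← ofReal_integral_eq_lintegral_ofReal integrable_inv_one_add_sq
      (Filter.Eventually.of_forall fun t => by positivity), integral_univ_inv_one_add_sq]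
  have h2 : ∀ t, kk v t = ENNReal.ofReal (v⁻¹ ^ 2) * ENNReal.ofReal ((1 + (v⁻¹ * t) ^ 2)⁻¹) := by
    intro t
    rw [kk, ← ENNReal.ofReal_mul (by positivity)]
    congr 1
    field_simp
  simp_rw [h2]
  rw [lintegral_const_mul _ (by fun_prop),
    lintegral_scale (fun t => ENNReal.ofReal ((1 + t ^ 2)⁻¹)) (by fun_prop) v⁻¹ (by positivity), h1,
    ← ENNReal.ofReal_mul (by positivity), ← ENNReal.ofReal_mul (by positivity), inv_inv,
    abs_of_pos hv]
  congr 1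
  field_simp

lemma Pk_hardy (v : ℝ) (hv : 0 < v) (x0 : ℝ) :
    hardyNormSq (Pk v x0 1 1 1) ≤ ENNReal.ofReal ((Real.pi / v) ^ 3) := by
  unfold hardyNormSq
  refine iSup₂_le fun y hy => ?_
  have hpi := Real.pi_pos
  have hb : ∀ x : Fin 3 → ℝ, (‖Pk v x0 1 1 1 (fun i => (x i : ℂ) + (y i : ℂ) * Complex.I)‖₊ : ℝ≥0∞) ^ 2
      ≤ kk v (x 0 + x 1 - x0) * kk v (x 0 - x 1 - x0) * kk v (x 0 + x 2 - x0) := by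
    intro x
    have hT : (fun i => (x i : ℂ) + (y i : ℂ) * Complex.I) ∈ TLambda3 := by
      change (fun i => ((x i : ℂ) + (y i : ℂ) * Complex.I).im) ∈ Lambda3
      simpa using hy
    obtain ⟨i1, i2, i3⟩ := T_im hT
    have n1 := uk_norm_sq (x0 := x0) hv i1
    have n2 := uk_norm_sq (x0 := x0) hv i2
    have n3 := uk_norm_sq (x0 := x0) hv i3
    change ‖Pk v x0 1 1 1 (fun i => (x i : ℂ) + (y i : ℂ) * Complex.I)‖ₑ ^ 2 ≤ _
    unfold kk
    rw [← ENNReal.ofReal_mul (by positivity), ← ENNReal.ofReal_mul (by positivity), ← ofReal_norm,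
      ← ENNReal.ofReal_pow (norm_nonneg _)]
    apply ENNReal.ofReal_le_ofReal
    simp only [Pk, pow_one, norm_mul, mul_pow]
    refine mul_le_mul (mul_le_mul ?_ ?_ (by positivity) (by positivity)) ?_ (by positivity) (by positivity)
    · simpa using n1
    · simpa using n2
    · simpa using n3
  refine (lintegral_mono hb).trans ?_
  rw [lintegral_fin3 _ (by fun_prop)]
  set A := ENNReal.ofReal (Real.pi / v) with hA
  have hAT : A ≠ ⊤ := ENNReal.ofReal_ne_top
  have c1 : ∀ a b : ℝ, ∫⁻ c : ℝ, kk v (a + b - x0) * kk v (a - b - x0) * kk v (a + c - x0) =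
      kk v (a + b - x0) * kk v (a - b - x0) * A := by
    intro a b
    rw [lintegral_const_mul _ (by fun_prop)]
    congr 1
    rw [hA, ← kk_int v hv, ← lintegral_add_left_eq_self (kk v) (a - x0)]
    refine lintegral_congr fun c => ?_
    congr 1; ring
  have c2 : ∀ a : ℝ, ∫⁻ b : ℝ, kk v (a + b - x0) * kk v (a - b - x0) =
      ∫⁻ b : ℝ, kk v b * kk v (2 * a - 2 * x0 - b) := by
    intro a
    rw [← lintegral_add_left_eq_self (fun b => kk v b * kk v (2 * a - 2 * x0 - b)) (a - x0)]
    refine lintegral_congr fun c => ?_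
    congr 2 <;> ring
  have c3 : ∫⁻ a : ℝ, ∫⁻ b : ℝ, kk v b * kk v (2 * a - 2 * x0 - b) ≤ A * A := by
    rw [swap_l (fun a b => kk v b * kk v (2 * a - 2 * x0 - b)) (by fun_prop)]
    have : ∀ b, ∫⁻ a : ℝ, kk v b * kk v (2 * a - 2 * x0 - b) ≤ kk v b * A := by
      intro b
      rw [lintegral_const_mul _ (by fun_prop)]
      refine mul_le_mul_right ?_ _
      have := lintegral_affine (kk v) (kk_meas v measurable_id) (- 2 * x0 - b) 2 two_ne_zero
      calc _ = ∫⁻ a : ℝ, kk v (- 2 * x0 - b + 2 * a) := by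
            refine lintegral_congr fun a => ?_
            congr 1; ring
        _ = _ := this
        _ ≤ 1 * ∫⁻ a, kk v a := by
            refine mul_le_mul_left ?_ _
            rw [← ENNReal.ofReal_one]
            apply ENNReal.ofReal_le_ofReal
            norm_num
        _ = A := by rw [one_mul, kk_int v hv]
    calc _ ≤ ∫⁻ b, kk v b * A := lintegral_mono this
      _ = A * A := by rw [lintegral_mul_const' _ _ hAT, kk_int v hv]
  have hcc : ∀ a b c : ℝ, kk v (![a, b, c] 0 + ![a, b, c] 1 - x0) * kk v (![a, b, c] 0 - ![a, b, c] 1 - x0) *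
     kk v (![a, b, c] 0 + ![a, b, c] 2 - x0) =
     kk v (a + b - x0) * kk v (a - b - x0) * kk v (a + c - x0) := fun a b c => rfl
  simp_rw [hcc, c1, lintegral_mul_const' _ _ hAT, c2]
  calc _ ≤ A * A * A := mul_le_mul_left c3 _
    _ = _ := by
      rw [hA, ENNReal.ofReal_pow (by positivity)]; ring


lemma test_bound (m : ℕ) (μ : Measure ℂ) (C : ℝ) (hC : 0 < C)
    (h : ∀ F : (Fin 3 → ℂ) → ℂ,
        DifferentiableOn ℂ F TLambda3 → hardyNormSq F < ⊤ →
        (∫⁻ z in UHP, (‖Box^[m] F ![z, 0, 0]‖₊ : ℝ≥0∞) ^ 2 ∂μ)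
          ≤ ENNReal.ofReal C * hardyNormSq F) :
    ∃ C1 : ℝ, 0 < C1 ∧ ∀ w ∈ UHP,
      μ (UHP ∩ Metric.ball w (w.im / 2)) ≤ ENNReal.ofReal (C1 * w.im ^ (4 * m + 3)) := by
  obtain ⟨c, hc, hB⟩ := Pk_Box_iter m
  have hpi := Real.pi_pos
  refine ⟨C * Real.pi ^ 3 * 3 ^ (4 * m + 6) / c ^ 2, by positivity, fun w hw => ?_⟩
  have hv : 0 < w.im := hw
  set v := w.im with hvdef
  set x0 := w.re
  set S := UHP ∩ Metric.ball w (v / 2) with hS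
  have hSm : MeasurableSet S := isOpen_UHP.measurableSet.inter Metric.isOpen_ball.measurableSet
  set κ : ℝ := c ^ 2 * ((3 * v)⁻¹) ^ (4 * m + 6) with hκ
  have hκ0 : 0 < κ := by positivity
  have lower : ∀ z ∈ S, ENNReal.ofReal κ ≤ (‖Box^[m] (Pk v x0 1 1 1) ![z, 0, 0]‖₊ : ℝ≥0∞) ^ 2 := by
    intro z hz
    rw [hB v hv x0 z hz.1]
    change _ ≤ ‖(c : ℂ) * uk v x0 z ^ (3 + 2 * m)‖ₑ ^ 2
    rw [← ofReal_norm, ← ENNReal.ofReal_pow (norm_nonneg _)]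
    apply ENNReal.ofReal_le_ofReal
    rw [norm_mul, norm_pow, mul_pow, ← pow_mul, hκ, Complex.norm_real, Real.norm_of_nonneg hc.le,
      show (3 + 2 * m) * 2 = 4 * m + 6 by ring]
    refine mul_le_mul_of_nonneg_left (pow_le_pow_left₀ (by positivity) ?_ _) (by positivity)
    unfold uk
    rw [norm_inv]
    refine inv_anti₀ (norm_pos_iff.2 (uk_den_ne hv (le_of_lt hz.1))) ?_
    have hzw : ‖z - w‖ < v / 2 := by simpa [dist_eq_norm] using hz.2
    have e : (v - Complex.I * (z - x0) : ℂ) = (2 * v : ℝ) - Complex.I * (z - w) := by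
      have : w = x0 + v * Complex.I := (Complex.re_add_im w).symm
      rw [this]; push_cast
      linear_combination (-(v : ℂ)) * Complex.I_sq
    rw [e]
    refine (norm_sub_le _ _).trans ?_
    rw [norm_mul, Complex.norm_I, one_mul, Complex.norm_real, Real.norm_of_nonneg (by positivity)]
    linarith
  have hH := Pk_hardy v hv x0
  have h1 := h _ (Pk_diff hv x0 1 1 1) (hH.trans_lt ENNReal.ofReal_lt_top)
  have h2 : ENNReal.ofReal κ * μ S ≤ ENNReal.ofReal C * ENNReal.ofReal ((Real.pi / v) ^ 3) :=
    calc ENNReal.ofReal κ * μ S = ∫⁻ _ in S, ENNReal.ofReal κ ∂μ := by rw [setLIntegral_const]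
      _ ≤ ∫⁻ z in S, (‖Box^[m] (Pk v x0 1 1 1) ![z, 0, 0]‖₊ : ℝ≥0∞) ^ 2 ∂μ :=
        setLIntegral_mono' hSm lower
      _ ≤ _ := lintegral_mono_set inter_subset_left
      _ ≤ _ := h1
      _ ≤ _ := mul_le_mul_right hH _
  have h3 : ENNReal.ofReal C * ENNReal.ofReal ((Real.pi / v) ^ 3) = ENNReal.ofReal κ *
      ENNReal.ofReal (C * Real.pi ^ 3 * 3 ^ (4 * m + 6) / c ^ 2 * v ^ (4 * m + 3)) := by
    rw [← ENNReal.ofReal_mul hC.le, ← ENNReal.ofReal_mul hκ0.le]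
    congr 1
    rw [hκ, inv_pow, mul_pow]
    field_simp
    try ring
  rw [h3] at h2
  exact (ENNReal.mul_le_mul_iff_right (by simpa using hκ0) ENNReal.ofReal_ne_top).1 h2

/-- the kernel set -/
def kset : Set (ℂ × ℂ) := {p | ‖p.1 - p.2‖ < p.2.im / 2}

lemma kset_meas : MeasurableSet kset := by
  apply IsOpen.measurableSet
  exact isOpen_lt (by fun_prop) (Continuous.div_const (Complex.continuous_im.comp continuous_snd) 2)

lemma point_bound {G : ℂ → ℂ} (hG : DifferentiableOn ℂ G UHP) {z : ℂ} (hz : z ∈ UHP) :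
    ‖G z‖ₑ ^ 2 ≤ ENNReal.ofReal (32 / Real.pi) * ∫⁻ w, kset.indicator (fun _ => (1 : ℝ≥0∞)) (z, w) *
      (‖UHP.indicator G w‖ₑ ^ 2 * ENNReal.ofReal ((w.im ^ 2)⁻¹)) := by
  have hpi := Real.pi_pos
  have hy : 0 < z.im := hz
  set y := z.im with hydef
  set H : ℂ → ℝ≥0∞ := fun w => kset.indicator (fun _ => (1 : ℝ≥0∞)) (z, w) *
      (‖UHP.indicator G w‖ₑ ^ 2 * ENNReal.ofReal ((w.im ^ 2)⁻¹)) with hH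
  have key : ∀ ζ ∈ Metric.ball (0 : ℂ) (y / 4), |ζ.im| < y / 4 := by
    intro ζ hζ
    have : ‖ζ‖ < y / 4 := by simpa using hζ
    exact (Complex.abs_im_le_norm ζ).trans_lt this
  have hsub := submean (fun ζ => G (z + ζ)) (y / 4) (by positivity) (by
    refine hG.comp (by fun_prop) fun ζ hζ => ?_
    have := abs_lt.1 (key ζ hζ)
    change 0 < (z + ζ).im
    rw [Complex.add_im]; linarith)
  simp only [add_zero] at hsub
  have h1 : ∫⁻ ζ in Metric.ball 0 (y / 4), ‖G (z + ζ)‖ₑ ^ 2 ≤ ENNReal.ofReal (2 * y ^ 2) * ∫⁻ w, H w :=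
    calc _ ≤ ∫⁻ ζ in Metric.ball 0 (y / 4), ENNReal.ofReal (2 * y ^ 2) * H (z + ζ) := by
          refine setLIntegral_mono' Metric.isOpen_ball.measurableSet fun ζ hζ => ?_
          have hi := abs_lt.1 (key ζ hζ)
          have hn : ‖ζ‖ < y / 4 := by simpa using hζ
          have him : (z + ζ).im = y + ζ.im := Complex.add_im _ _
          have hu : z + ζ ∈ UHP := by
            change 0 < (z + ζ).im
            rw [him]; linarith
          have hk : (z, z + ζ) ∈ kset := by
            change ‖z - (z + ζ)‖ < (z + ζ).im / 2
            rw [him, sub_add_cancel_left, norm_neg]; linarith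
          simp only [hH]
          rw [indicator_of_mem hk, indicator_of_mem hu, one_mul, mul_comm (‖G (z + ζ)‖ₑ ^ 2), ← mul_assoc,
            ← ENNReal.ofReal_mul (by positivity)]
          refine le_mul_of_one_le_left' ?_
          rw [ENNReal.one_le_ofReal, him, ← div_eq_mul_inv, one_le_div (by nlinarith)]
          nlinarith
      _ ≤ ∫⁻ ζ, ENNReal.ofReal (2 * y ^ 2) * H (z + ζ) := setLIntegral_le_lintegral _ _
      _ = ENNReal.ofReal (2 * y ^ 2) * ∫⁻ ζ, H (z + ζ) := lintegral_const_mul' _ _ ENNReal.ofReal_ne_top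
      _ = _ := by rw [lintegral_add_left_eq_self H z]
  have h2 := hsub.trans h1
  have h3 : ENNReal.ofReal (2 * y ^ 2) = ENNReal.ofReal (32 / Real.pi) * ENNReal.ofReal (Real.pi * (y / 4) ^ 2) := by
    rw [← ENNReal.ofReal_mul (by positivity)]
    congr 1
    field_simp
    ring
  rw [h3, mul_right_comm] at h2
  exact (ENNReal.mul_le_mul_iff_left (by simp; positivity) ENNReal.ofReal_ne_top).1 h2

lemma sf_of_test (μ : Measure ℂ) (C1 : ℝ) (m : ℕ) (h : ∀ w ∈ UHP,
      μ (UHP ∩ Metric.ball w (w.im / 2)) ≤ ENNReal.ofReal (C1 * w.im ^ (4 * m + 3))) :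
    SigmaFinite (μ.restrict UHP) := by
  have hloc : ∀ w : ℂ, ∃ U : Set ℂ, (w ∈ UHP → IsOpen U ∧ w ∈ U ∧ μ (UHP ∩ U) < ⊤) := by
    intro w
    refine ⟨Metric.ball w (w.im / 2), fun hw => ⟨Metric.isOpen_ball, Metric.mem_ball_self (half_pos hw),
      (h w hw).trans_lt ENNReal.ofReal_lt_top⟩⟩
  choose U hU using hloc
  obtain ⟨t, htc, htU⟩ := TopologicalSpace.isOpen_iUnion_countable (fun w : UHP => U w) (fun w => (hU w w.2).1)
  have : Countable t := htc.to_subtype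
  have hcov : UHP ⊆ ⋃ w ∈ t, U w := by
    rw [htU]
    intro w hw
    exact mem_iUnion.2 ⟨⟨w, hw⟩, (hU w hw).2.1⟩
  set K : Set (Set ℂ) := insert UHPᶜ ((fun w : UHP => U w) '' t) with hK
  refine Measure.sigmaFinite_of_countable (S := K) ((htc.image _).insert _) ?_ ?_
  · rintro s (rfl | ⟨w, hw, rfl⟩)
    · rw [Measure.restrict_apply isOpen_UHP.measurableSet.compl]; simp
    · change μ.restrict UHP (U w) < ⊤
      rw [Measure.restrict_apply (hU w w.2).1.measurableSet, inter_comm]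
      exact (hU w w.2).2.2
  · rw [eq_univ_iff_forall]
    intro z
    by_cases hz : z ∈ UHP
    · obtain ⟨w, hw, hzw⟩ := mem_iUnion₂.1 (hcov hz)
      exact ⟨U w, Or.inr ⟨w, hw, rfl⟩, hzw⟩
    · exact ⟨UHPᶜ, Or.inl rfl, hz⟩

lemma carleson_of_test (μ : Measure ℂ) (C1 : ℝ) (hC1 : 0 < C1) (m : ℕ) (h : ∀ w ∈ UHP,
      μ (UHP ∩ Metric.ball w (w.im / 2)) ≤ ENNReal.ofReal (C1 * w.im ^ (4 * m + 3)))
    (G : ℂ → ℂ) (hG : DifferentiableOn ℂ G UHP) :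
    ∫⁻ z in UHP, ‖G z‖ₑ ^ 2 ∂μ ≤ ENNReal.ofReal (32 / Real.pi * C1) * bergNormSqUHP (4 * m + 1) G := by
  have hsf := sf_of_test μ C1 m h
  have hpi := Real.pi_pos
  have hGm : Measurable (UHP.indicator G) := measurable_indicator_of_continuousOn isOpen_UHP hG.continuousOn
  have hkm : Measurable (kset.indicator (fun _ => (1 : ℝ≥0∞))) := measurable_const.indicator kset_meas
  rw [berg_eq]
  calc ∫⁻ z in UHP, ‖G z‖ₑ ^ 2 ∂μ
      ≤ ∫⁻ z in UHP, ENNReal.ofReal (32 / Real.pi) * (∫⁻ w, kset.indicator (fun _ => (1 : ℝ≥0∞)) (z, w) *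
        (‖UHP.indicator G w‖ₑ ^ 2 * ENNReal.ofReal ((w.im ^ 2)⁻¹))) ∂μ :=
        setLIntegral_mono' isOpen_UHP.measurableSet fun z hz => point_bound hG hz
    _ = ENNReal.ofReal (32 / Real.pi) * ∫⁻ w, ∫⁻ z in UHP, kset.indicator (fun _ => (1 : ℝ≥0∞)) (z, w) *
        (‖UHP.indicator G w‖ₑ ^ 2 * ENNReal.ofReal ((w.im ^ 2)⁻¹)) ∂μ := by
        rw [lintegral_const_mul' _ _ ENNReal.ofReal_ne_top, lintegral_lintegral_swap]
        apply Measurable.aemeasurable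
        have : Measurable (fun w : ℂ => ‖UHP.indicator G w‖ₑ ^ 2 * ENNReal.ofReal ((w.im ^ 2)⁻¹)) :=
          (hGm.enorm.pow_const 2).mul (((Complex.measurable_im.pow_const 2).inv).ennreal_ofReal)
        exact hkm.mul (this.comp measurable_snd)
    _ ≤ ENNReal.ofReal (32 / Real.pi) * ∫⁻ w, UHP.indicator (fun w => ENNReal.ofReal C1 *
          (ENNReal.ofReal (w.im ^ (4 * m + 1)) * ‖G w‖ₑ ^ 2)) w := by
        refine mul_le_mul_right (lintegral_mono fun w => ?_) _
        beta_reduce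
        by_cases hw : w ∈ UHP
        · have hv : 0 < w.im := hw
          rw [indicator_of_mem hw, indicator_of_mem hw]
          have hkw : Measurable (fun z : ℂ => kset.indicator (fun _ => (1 : ℝ≥0∞)) (z, w)) :=
            hkm.comp (by fun_prop : Measurable fun z : ℂ => (z, w))
          rw [lintegral_mul_const _ hkw]
          have e : ∫⁻ z in UHP, kset.indicator (fun _ => (1 : ℝ≥0∞)) (z, w) ∂μ =
              μ (UHP ∩ Metric.ball w (w.im / 2)) := by
            have : ∀ z, kset.indicator (fun _ => (1 : ℝ≥0∞)) (z, w) =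
                (Metric.ball w (w.im / 2)).indicator 1 z := by
              intro z
              by_cases hz : z ∈ Metric.ball w (w.im / 2)
              · rw [indicator_of_mem hz, indicator_of_mem]
                · rfl
                · simpa [kset, dist_eq_norm] using hz
              · rw [indicator_of_notMem hz, indicator_of_notMem]
                simpa [kset, dist_eq_norm] using hz
            simp_rw [this]
            rw [lintegral_indicator_one Metric.isOpen_ball.measurableSet,
              Measure.restrict_apply Metric.isOpen_ball.measurableSet, inter_comm]
          rw [e]
          calc _ ≤ ENNReal.ofReal (C1 * w.im ^ (4 * m + 3)) * (‖G w‖ₑ ^ 2 * ENNReal.ofReal ((w.im ^ 2)⁻¹)) :=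
                mul_le_mul_left (h w hw) _
            _ = ENNReal.ofReal (C1 * w.im ^ (4 * m + 3)) * ENNReal.ofReal ((w.im ^ 2)⁻¹) * ‖G w‖ₑ ^ 2 := by ring
            _ = _ := by
              rw [← mul_assoc, ← ENNReal.ofReal_mul (by positivity), ← ENNReal.ofReal_mul (by positivity)]
              congr 2
              field_simp
              ring
            _ ≤ _ := le_rfl
        · rw [indicator_of_notMem hw, indicator_of_notMem hw]
          simp
    _ = _ := by
        rw [lintegral_indicator isOpen_UHP.measurableSet, lintegral_const_mul' _ _ ENNReal.ofReal_ne_top,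
          ← mul_assoc, ← ENNReal.ofReal_mul (by positivity)]

/-- for a positive measure `μ` on `Π⁺`, `μ(z₁) ⊗ δ_O(z₂,z₃)` is an
`m`-box Carleson measure for `H²(T_{Λ₃})` iff `μ` is a Carleson measure for the
weighted Bergman space `A²_{4m+1}(Π⁺)`. -/
theorem dirac_box_carleson_iff_bergman_carleson (m : ℕ) (μ : Measure ℂ) :
    (∃ C : ℝ, 0 < C ∧ ∀ F : (Fin 3 → ℂ) → ℂ,
        DifferentiableOn ℂ F TLambda3 → hardyNormSq F < ⊤ →
        (∫⁻ z in UHP, (‖Box^[m] F ![z, 0, 0]‖₊ : ℝ≥0∞) ^ 2 ∂μ)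
          ≤ ENNReal.ofReal C * hardyNormSq F)
    ↔ (∃ C' : ℝ, 0 < C' ∧ ∀ G : ℂ → ℂ,
        DifferentiableOn ℂ G UHP → bergNormSqUHP (4 * m + 1) G < ⊤ →
        (∫⁻ z in UHP, (‖G z‖₊ : ℝ≥0∞) ^ 2 ∂μ)
          ≤ ENNReal.ofReal C' * bergNormSqUHP (4 * m + 1) G) := by
  constructor
  · rintro ⟨C, hC, h⟩
    obtain ⟨C1, hC1, h1⟩ := test_bound m μ C hC h
    have hpi := Real.pi_pos
    exact ⟨32 / Real.pi * C1, by positivity, fun G hG _ => carleson_of_test μ C1 hC1 m h1 G hG⟩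
  · rintro ⟨C', hC', h⟩
    obtain ⟨K, hK, hb⟩ := berg_bound m
    refine ⟨C' * (K.toReal + 1), by positivity, fun F hF hH => ?_⟩
    have hB := hb hF hH
    refine (h _ (G_diff hF m) (hB.trans_lt (ENNReal.mul_lt_top hK hH))).trans ?_
    rw [ENNReal.ofReal_mul hC'.le, mul_assoc]
    refine mul_le_mul_right (hB.trans (mul_le_mul_left ?_ _)) _
    rw [← ENNReal.ofReal_toReal hK.ne, ENNReal.toReal_ofReal (by positivity)]
    exact ENNReal.ofReal_le_ofReal (by linarith)
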